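/- arXiv:1807.00497 — 3 statements merged into one kernel-verified Lean document; each statement's English description precedes it below -/
import Mathlib

section
/- Let b > 0, let Φ:(0,b) → End(ℝ^{n+2}) be continuous, and let ℬ:(0,b) → ℝ be integrable with ‖Φ(t)‖ ≤ ℬ(t) for all t ∈ (0,b). Fix p ∈ (0,b) and let G:(0,b) → End(ℝ^{n+2}) be differentiable with G′(t) = G(t)∘Φ(t) for all t and G(p) = id. Then: (i) the limit of G(t) as t → 0⁺ exists; (ii) for every t ∈ (0,p], ‖G(t) − id‖ ≤ exp(∫ₜ^p ℬ(τ) d τ) − 1; and (iii) if in addition every Φ(t) is skew-adjoint with respect to the Minkowski form, then the limit in (i) is an invertible endomorphism preserving the Minkowski form. -/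
open scoped BigOperators Topology
open Filter Set MeasureTheory

noncomputable section

abbrev E (n : ℕ) := EuclideanSpace ℝ (Fin (n + 2))

/-- Minkowski inner product of signature (n+1,1). -/
def mink {n : ℕ} (x y : E n) : ℝ :=
  ∑ i, (if i = Fin.last (n + 1) then (-1 : ℝ) else 1) * x i * y i

variable {n : ℕ}

lemma mink_comm (x y : E n) : mink x y = mink y x :=
  Finset.sum_congr rfl fun i _ => by ring

lemma mink_add_right (v x y : E n) : mink v (x + y) = mink v x + mink v y := by
  simp [mink, mul_add, Finset.sum_add_distrib]

lemma mink_smul_right (v : E n) (c : ℝ) (x : E n) : mink v (c • x) = c * mink v x := by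
  unfold mink
  rw [Finset.mul_sum]
  refine Finset.sum_congr rfl fun i _ => ?_
  simp only [PiLp.smul_apply, smul_eq_mul]
  ring

lemma mink_add_left (x y v : E n) : mink (x + y) v = mink x v + mink y v := by
  rw [mink_comm, mink_add_right, mink_comm v x, mink_comm v y]

lemma mink_smul_left (c : ℝ) (x v : E n) : mink (c • x) v = c * mink x v := by
  rw [mink_comm, mink_smul_right, mink_comm v x]

/-- `v ∧ w` as an endomorphism: `x ↦ ⟨v,x⟩ w − ⟨w,x⟩ v`. -/
def wedge {n : ℕ} (v w : E n) : E n →L[ℝ] E n :=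
  LinearMap.toContinuousLinearMap
    { toFun := fun x => mink v x • w - mink w x • v
      map_add' := by
        intro x y
        simp only [mink_add_right, add_smul]
        abel
      map_smul' := by
        intro c x
        simp only [mink_smul_right, RingHom.id_apply, mul_smul, smul_sub] }

/-- rank one endomorphism `vw* : x ↦ ⟨x,w⟩ v`. -/
def rankOne {n : ℕ} (v w : E n) : E n →L[ℝ] E n :=
  LinearMap.toContinuousLinearMap
    { toFun := fun x => mink x w • v
      map_add' := by
        intro x y
        simp only [mink_add_left, add_smul]
      map_smul' := by
        intro c x
        simp only [mink_smul_left, RingHom.id_apply, mul_smul] }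

/-!
With `u t = ‖G t‖` the equation `G' = G Φ` gives `u t ≤ u p + ∫ τ in t..p, B τ * u τ`. By Grönwall
`G` stays bounded near the singularity, so `G'` is integrable there and `G` has a limit. The same
inequality applied to `1 + ‖G - 1‖` is the exponential bound. If `Φ` is skew for a form with
adjunction `σ`, then `H = σ ∘ G` solves `H' = -Φ H`. Hence `G H` is constant, while `H G - 1` solves
a homogeneous linear equation and vanishes at `p`; thus `H` is a two-sided inverse of `G`, and this
passes to the limit. That `σ L` inverts `L` says that `L` is bijective and preserves the form.
-/

section Gronwall

lemma absolutelyContinuousOnInterval_comp_of_contDiff {φ f : ℝ → ℝ} {a b : ℝ}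
    (hφ : ContDiff ℝ 1 φ) (hf : AbsolutelyContinuousOnInterval f a b) :
    AbsolutelyContinuousOnInterval (φ ∘ f) a b := by
  obtain ⟨C, hC⟩ := hf.exists_bound
  obtain ⟨K, hK⟩ := hφ.contDiffOn.exists_lipschitzOnWith one_ne_zero
    (convex_closedBall (0 : ℝ) C) (isCompact_closedBall 0 C)
  have hmaps : ∀ t ∈ uIcc a b, f t ∈ Metric.closedBall 0 C := fun t ht =>
    mem_closedBall_zero_iff.2 (hC t ht)
  refine squeeze_zero' (.of_forall fun I => Finset.sum_nonneg fun i _ => dist_nonneg) ?_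
    (by simpa using Tendsto.const_mul (K : ℝ) hf)
  filter_upwards [mem_inf_of_right (mem_principal_self _)] with I hI
  rw [Finset.mul_sum]
  exact Finset.sum_le_sum fun i hi =>
    hK.dist_le_mul _ (hmaps _ (hI.1 i hi).1) _ (hmaps _ (hI.1 i hi).2)

lemma le_of_absolutelyContinuousOnInterval_of_ae_deriv_nonneg {f : ℝ → ℝ} {a b : ℝ} (hab : a ≤ b)
    (hf : AbsolutelyContinuousOnInterval f a b)
    (hderiv : ∀ᵐ t, t ∈ uIcc a b → 0 ≤ deriv f t) : f a ≤ f b := by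
  have hint : 0 ≤ ∫ t in a..b, deriv f t := by
    refine intervalIntegral.integral_nonneg_of_ae_restrict hab ?_
    rw [← uIcc_of_le hab]
    exact (ae_restrict_iff' measurableSet_uIcc).2 hderiv
  rwa [hf.integral_deriv_eq_sub, sub_nonneg] at hint

lemma le_mul_exp_integral_of_le_add_integral {u K : ℝ → ℝ} {c s q : ℝ} (hsq : s ≤ q)
    (hK : IntervalIntegrable K volume s q) (hK_nonneg : ∀ t ∈ Icc s q, 0 ≤ K t)
    (hu : ContinuousOn u (Icc s q))
    (hle : ∀ t ∈ Icc s q, u t ≤ c + ∫ τ in t..q, K τ * u τ) :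
    u s ≤ c * Real.exp (∫ τ in s..q, K τ) := by
  rw [← uIcc_of_le hsq] at hK_nonneg hu hle
  have hKu : IntervalIntegrable (fun τ => K τ * u τ) volume s q := hK.mul_continuousOn hu
  -- `K` is merely integrable, so `w` and `e` are differentiable only almost everywhere and the
  -- monotonicity of `w * e` has to go through absolute continuity.
  let w : ℝ → ℝ := fun t => c - ∫ τ in q..t, K τ * u τ
  let e : ℝ → ℝ := Real.exp ∘ fun t => ∫ τ in q..t, K τ
  have hw_ac : AbsolutelyContinuousOnInterval w s q :=
    (LipschitzWith.const c).lipschitzOnWith.absolutelyContinuousOnInterval.fun_sub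
      (hKu.absolutelyContinuousOnInterval_intervalIntegral right_mem_uIcc)
  have he_ac : AbsolutelyContinuousOnInterval e s q :=
    absolutelyContinuousOnInterval_comp_of_contDiff Real.contDiff_exp
      (hK.absolutelyContinuousOnInterval_intervalIntegral right_mem_uIcc)
  have hw_ge : ∀ t ∈ uIcc s q, u t ≤ w t := fun t ht => by
    simpa only [w, intervalIntegral.integral_symm t q, sub_neg_eq_add] using hle t ht
  have hderiv_nonneg : ∀ᵐ t, t ∈ uIcc s q → 0 ≤ deriv (fun t => w t * e t) t := by
    filter_upwards [hK.ae_hasDerivAt_integral, hKu.ae_hasDerivAt_integral] with t hKt hKut ht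
    have hw' : HasDerivAt w (-(K t * u t)) t := (hKut ht q right_mem_uIcc).const_sub c
    have he' : HasDerivAt e (e t * K t) t := (hKt ht q right_mem_uIcc).exp
    have he_nonneg : 0 ≤ e t := (Real.exp_pos _).le
    rw [(hw'.fun_mul he').deriv]
    calc 0 ≤ K t * e t * (w t - u t) :=
          mul_nonneg (mul_nonneg (hK_nonneg t ht) he_nonneg) (sub_nonneg.2 (hw_ge t ht))
      _ = -(K t * u t) * e t + w t * (e t * K t) := by ring
  have hwe_le : w s * e s ≤ c := by
    simpa [w, e] using le_of_absolutelyContinuousOnInterval_of_ae_deriv_nonneg hsq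
      (hw_ac.fun_mul he_ac) hderiv_nonneg
  have he_mul_exp : e s * Real.exp (∫ τ in s..q, K τ) = 1 := by
    simp only [e, Function.comp_apply]
    rw [← Real.exp_add, intervalIntegral.integral_symm s q, neg_add_cancel, Real.exp_zero]
  calc u s ≤ w s := hw_ge s left_mem_uIcc
    _ = w s * e s * Real.exp (∫ τ in s..q, K τ) := by rw [mul_assoc, he_mul_exp, mul_one]
    _ ≤ c * Real.exp (∫ τ in s..q, K τ) := by gcongr

variable {F : Type*} [NormedAddCommGroup F] [NormedSpace ℝ F] [CompleteSpace F]
  {f f' : ℝ → F} {K : ℝ → ℝ} {a b c s q : ℝ}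

lemma integrableOn_of_hasDerivAt_of_norm_le {S : Set ℝ} (hS : MeasurableSet S)
    (hf : ∀ t ∈ S, HasDerivAt f (f' t) t) (hK : IntegrableOn K S)
    (hle : ∀ t ∈ S, ‖f' t‖ ≤ K t) : IntegrableOn f' S := by
  have hmeas : AEStronglyMeasurable f' (volume.restrict S) :=
    (stronglyMeasurable_deriv f).aestronglyMeasurable.congr
      ((ae_restrict_iff' hS).2 (.of_forall fun t ht => (hf t ht).deriv))
  exact hK.mono' hmeas ((ae_restrict_iff' hS).2 (.of_forall hle))

lemma add_norm_le_mul_exp_integral_of_norm_deriv_le (hsq : s ≤ q)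
    (hK : IntervalIntegrable K volume s q) (hK_nonneg : ∀ t ∈ Icc s q, 0 ≤ K t)
    (hf : ∀ t ∈ Icc s q, HasDerivAt f (f' t) t)
    (hle : ∀ t ∈ Icc s q, ‖f' t‖ ≤ K t * (c + ‖f t‖)) :
    c + ‖f s‖ ≤ (c + ‖f q‖) * Real.exp (∫ τ in s..q, K τ) := by
  have hu : ContinuousOn (fun t => c + ‖f t‖) (Icc s q) := fun t ht =>
    (continuousAt_const.add (hf t ht).continuousAt.norm).continuousWithinAt
  have hKu : IntervalIntegrable (fun t => K t * (c + ‖f t‖)) volume s q :=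
    hK.mul_continuousOn (by rwa [uIcc_of_le hsq])
  have hf'_int : IntegrableOn f' (Icc s q) :=
    integrableOn_of_hasDerivAt_of_norm_le measurableSet_Icc hf
      ((intervalIntegrable_iff_integrableOn_Icc_of_le hsq).1 hKu) hle
  refine le_mul_exp_integral_of_le_add_integral hsq hK hK_nonneg hu fun t ht => ?_
  have hsub : Icc t q ⊆ Icc s q := Icc_subset_Icc_left ht.1
  have hftc : ∫ τ in t..q, f' τ = f q - f t :=
    intervalIntegral.integral_eq_sub_of_hasDerivAt
      (fun τ hτ => hf τ (hsub (uIcc_of_le ht.2 ▸ hτ)))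
      ((intervalIntegrable_iff_integrableOn_Icc_of_le ht.2).2 (hf'_int.mono_set hsub))
  have hvar : ‖f q - f t‖ ≤ ∫ τ in t..q, K τ * (c + ‖f τ‖) := by
    rw [← hftc]
    refine intervalIntegral.norm_integral_le_of_norm_le ht.2
      (.of_forall fun τ hτ => hle τ (hsub (Ioc_subset_Icc_self hτ))) (hKu.mono_set ?_)
    rwa [uIcc_of_le ht.2, uIcc_of_le hsq]
  linarith [norm_le_norm_add_norm_sub (f q) (f t)]

lemma exists_tendsto_nhdsGT_of_hasDerivAt_of_integrableOn (hab : a < b)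
    (hf : ∀ t ∈ Ioc a b, HasDerivAt f (f' t) t) (hf' : IntegrableOn f' (Ioc a b)) :
    ∃ l, Tendsto f (𝓝[>] a) (𝓝 l) := by
  have hcont : ContinuousOn (fun t => ∫ τ in t..b, f' τ) (Icc a b) := by
    rw [← integrableOn_Icc_iff_integrableOn_Ioc, ← uIcc_of_le hab.le] at hf'
    rw [← uIcc_of_le hab.le]
    exact intervalIntegral.continuousOn_primitive_interval_left hf'
  have hlim : Tendsto (fun t => ∫ τ in t..b, f' τ) (𝓝[>] a) (𝓝 (∫ τ in a..b, f' τ)) := by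
    rw [← nhdsWithin_Ioc_eq_nhdsGT hab]
    exact (hcont a (left_mem_Icc.2 hab.le)).mono_left (nhdsWithin_mono _ Ioc_subset_Icc_self)
  refine ⟨f b - ∫ τ in a..b, f' τ, (hlim.const_sub (f b)).congr' ?_⟩
  filter_upwards [Ioc_mem_nhdsGT hab] with t ht
  have hsub : Icc t b ⊆ Ioc a b := fun τ hτ => ⟨ht.1.trans_le hτ.1, hτ.2⟩
  rw [intervalIntegral.integral_eq_sub_of_hasDerivAt
      (fun τ hτ => hf τ (hsub (uIcc_of_le ht.2 ▸ hτ)))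
      ((intervalIntegrable_iff_integrableOn_Icc_of_le ht.2).2 (hf'.mono_set hsub)),
    sub_sub_cancel]

lemma exists_tendsto_nhdsGT_of_norm_deriv_le_mul_norm (hab : a < b)
    (hK : IntegrableOn K (Ioc a b)) (hK_nonneg : ∀ t ∈ Ioc a b, 0 ≤ K t)
    (hf : ∀ t ∈ Ioc a b, HasDerivAt f (f' t) t)
    (hle : ∀ t ∈ Ioc a b, ‖f' t‖ ≤ K t * ‖f t‖) :
    ∃ l, Tendsto f (𝓝[>] a) (𝓝 l) := by
  have hK_int : IntervalIntegrable K volume a b :=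
    (intervalIntegrable_iff_integrableOn_Ioc_of_le hab.le).2 hK
  have hbounded : ∀ t ∈ Ioc a b, ‖f t‖ ≤ ‖f b‖ * Real.exp (∫ τ in a..b, K τ) := fun t ht => by
    have hsub : Icc t b ⊆ Ioc a b := fun τ hτ => ⟨ht.1.trans_le hτ.1, hτ.2⟩
    have hgronwall := add_norm_le_mul_exp_integral_of_norm_deriv_le (c := 0) ht.2
      ((intervalIntegrable_iff_integrableOn_Icc_of_le ht.2).2 (hK.mono_set hsub))
      (fun τ hτ => hK_nonneg τ (hsub hτ)) (fun τ hτ => hf τ (hsub hτ))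
      (fun τ hτ => by simpa only [zero_add] using hle τ (hsub hτ))
    have hmono : ∫ τ in t..b, K τ ≤ ∫ τ in a..b, K τ :=
      intervalIntegral.integral_mono_interval ht.1.le ht.2 le_rfl
        ((ae_restrict_iff' measurableSet_Ioc).2 (.of_forall hK_nonneg)) hK_int
    rw [zero_add, zero_add] at hgronwall
    exact hgronwall.trans (by gcongr)
  refine exists_tendsto_nhdsGT_of_hasDerivAt_of_integrableOn hab hf
    (integrableOn_of_hasDerivAt_of_norm_le measurableSet_Ioc hf
      (hK.mul_const (‖f b‖ * Real.exp (∫ τ in a..b, K τ))) fun t ht => ?_)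
  exact (hle t ht).trans (mul_le_mul_of_nonneg_left (hbounded t ht) (hK_nonneg t ht))

end Gronwall

section BanachAlgebra

variable {A : Type*} [NormedRing A] [NormedAlgebra ℝ A] {Φ G H : ℝ → A} {B : ℝ → ℝ} {a b s q : ℝ}

lemma mul_eq_of_hasDerivAt_mul_of_hasDerivAt_neg_mul (hsq : s ≤ q)
    (hG : ∀ t ∈ Icc s q, HasDerivAt G (G t * Φ t) t)
    (hH : ∀ t ∈ Icc s q, HasDerivAt H (-(Φ t * H t)) t) :
    G s * H s = G q * H q := by
  have hGH : ∀ t ∈ Icc s q, HasDerivAt (fun t => G t * H t) 0 t := fun t ht => by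
    refine ((hG t ht).fun_mul (hH t ht)).congr_deriv ?_
    rw [mul_neg, mul_assoc, add_neg_cancel]
  exact (constant_of_has_deriv_right_zero
    (fun t ht => (hGH t ht).continuousAt.continuousWithinAt)
    (fun t ht => (hGH t (Ico_subset_Icc_self ht)).hasDerivWithinAt) q (right_mem_Icc.2 hsq)).symm

variable [CompleteSpace A]

lemma norm_sub_one_le_exp_integral_sub_one (hsq : s ≤ q)
    (hB : IntervalIntegrable B volume s q) (hΦ : ∀ t ∈ Icc s q, ‖Φ t‖ ≤ B t)
    (hG : ∀ t ∈ Icc s q, HasDerivAt G (G t * Φ t) t) (hGq : G q = 1) :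
    ‖G s - 1‖ ≤ Real.exp (∫ τ in s..q, B τ) - 1 := by
  have hgronwall := add_norm_le_mul_exp_integral_of_norm_deriv_le (f := fun t => G t - 1) (c := 1)
    hsq hB (fun t ht => (norm_nonneg _).trans (hΦ t ht)) (fun t ht => (hG t ht).sub_const 1)
    fun t ht => by
      calc ‖G t * Φ t‖ = ‖Φ t + (G t - 1) * Φ t‖ := by rw [sub_mul, one_mul, add_sub_cancel]
        _ ≤ ‖Φ t‖ + ‖G t - 1‖ * ‖Φ t‖ := norm_add_le_of_le le_rfl (norm_mul_le _ _)
        _ = ‖Φ t‖ * (1 + ‖G t - 1‖) := by ring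
        _ ≤ B t * (1 + ‖G t - 1‖) := by gcongr; exact hΦ t ht
  rw [hGq, sub_self, norm_zero, add_zero, one_mul] at hgronwall
  linarith

lemma exists_tendsto_nhdsGT_of_hasDerivAt_mul (hab : a < b) (hB : IntegrableOn B (Ioc a b))
    (hΦ : ∀ t ∈ Ioc a b, ‖Φ t‖ ≤ B t) (hG : ∀ t ∈ Ioc a b, HasDerivAt G (G t * Φ t) t) :
    ∃ L, Tendsto G (𝓝[>] a) (𝓝 L) :=
  exists_tendsto_nhdsGT_of_norm_deriv_le_mul_norm hab hB
    (fun t ht => (norm_nonneg _).trans (hΦ t ht)) hG fun t ht => by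
      rw [mul_comm (B t)]
      exact norm_mul_le_of_le le_rfl (hΦ t ht)

lemma mul_eq_one_of_hasDerivAt_neg_mul_of_hasDerivAt_mul (hsq : s ≤ q)
    (hB : IntervalIntegrable B volume s q) (hΦ : ∀ t ∈ Icc s q, ‖Φ t‖ ≤ B t)
    (hG : ∀ t ∈ Icc s q, HasDerivAt G (G t * Φ t) t)
    (hH : ∀ t ∈ Icc s q, HasDerivAt H (-(Φ t * H t)) t) (hHG : H q * G q = 1) :
    H s * G s = 1 := by
  have hderiv : ∀ t ∈ Icc s q, HasDerivAt (fun t => H t * G t - 1)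
      ((H t * G t - 1) * Φ t - Φ t * (H t * G t - 1)) t := fun t ht => by
    refine (((hH t ht).fun_mul (hG t ht)).sub_const 1).congr_deriv ?_
    noncomm_ring
  have hgronwall := add_norm_le_mul_exp_integral_of_norm_deriv_le (c := 0) hsq (hB.const_mul 2)
    (fun t ht => mul_nonneg zero_le_two ((norm_nonneg _).trans (hΦ t ht))) hderiv fun t ht => by
      calc ‖(H t * G t - 1) * Φ t - Φ t * (H t * G t - 1)‖
          ≤ ‖H t * G t - 1‖ * ‖Φ t‖ + ‖Φ t‖ * ‖H t * G t - 1‖ :=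
            norm_sub_le_of_le (norm_mul_le _ _) (norm_mul_le _ _)
        _ = 2 * ‖Φ t‖ * (0 + ‖H t * G t - 1‖) := by ring
        _ ≤ 2 * B t * (0 + ‖H t * G t - 1‖) := by gcongr; exact hΦ t ht
  rw [hHG, sub_self, norm_zero, add_zero, zero_mul, zero_add] at hgronwall
  exact sub_eq_zero.1 (norm_le_zero_iff.1 hgronwall)

lemma mul_map_eq_one_and_map_mul_eq_one_of_tendsto (hab : a < b) (hB : IntegrableOn B (Ioc a b))
    (hΦ : ∀ t ∈ Ioc a b, ‖Φ t‖ ≤ B t) (hG : ∀ t ∈ Ioc a b, HasDerivAt G (G t * Φ t) t)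
    (hGb : G b = 1) {L : A} (hL : Tendsto G (𝓝[>] a) (𝓝 L)) {σ : A →L[ℝ] A}
    (hσ_mul : ∀ x y, σ (x * y) = σ y * σ x) (hσ_one : σ 1 = 1)
    (hσΦ : ∀ t ∈ Ioc a b, σ (Φ t) = -Φ t) :
    L * σ L = 1 ∧ σ L * L = 1 := by
  have hσG : ∀ t ∈ Ioc a b, HasDerivAt (fun t => σ (G t)) (-(Φ t * σ (G t))) t := fun t ht => by
    refine (σ.hasFDerivAt.comp_hasDerivAt t (hG t ht)).congr_deriv ?_
    rw [hσ_mul, hσΦ t ht, neg_mul]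
  have hsub : ∀ t ∈ Ioc a b, Icc t b ⊆ Ioc a b := fun t ht τ hτ => ⟨ht.1.trans_le hτ.1, hτ.2⟩
  have hinv : ∀ t ∈ Ioc a b, G t * σ (G t) = 1 ∧ σ (G t) * G t = 1 := fun t ht => by
    constructor
    · rw [mul_eq_of_hasDerivAt_mul_of_hasDerivAt_neg_mul ht.2 (fun τ hτ => hG τ (hsub t ht hτ))
        (fun τ hτ => hσG τ (hsub t ht hτ)), hGb, hσ_one, one_mul]
    · exact mul_eq_one_of_hasDerivAt_neg_mul_of_hasDerivAt_mul ht.2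
        ((intervalIntegrable_iff_integrableOn_Icc_of_le ht.2).2 (hB.mono_set (hsub t ht)))
        (fun τ hτ => hΦ τ (hsub t ht hτ)) (fun τ hτ => hG τ (hsub t ht hτ))
        (fun τ hτ => hσG τ (hsub t ht hτ)) (by rw [hGb, hσ_one, one_mul])
  have hσL : Tendsto (fun t => σ (G t)) (𝓝[>] a) (𝓝 (σ L)) := (σ.continuous.tendsto L).comp hL
  have hev : ∀ᶠ t in 𝓝[>] a, t ∈ Ioc a b := Ioc_mem_nhdsGT hab
  exact ⟨tendsto_nhds_unique_of_eventuallyEq (hL.mul hσL) tendsto_const_nhds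
      (hev.mono fun t ht => (hinv t ht).1),
    tendsto_nhds_unique_of_eventuallyEq (hσL.mul hL) tendsto_const_nhds
      (hev.mono fun t ht => (hinv t ht).2)⟩

end BanachAlgebra

section FormAdjoint

variable {V : Type*} [NormedAddCommGroup V] [NormedSpace ℝ V]

/-- The adjunction `T ↦ T†` of a continuous bilinear form on `V`, characterised by
`⟨T† x, y⟩ = ⟨x, T y⟩`. The form is encoded by the map `β : x ↦ ⟨x, ·⟩`, and its nondegeneracy by
`β` being an isomorphism onto the dual, so that `T†` is the transpose of `T` conjugated by `β`. -/
def formAdjoint (β : V ≃L[ℝ] StrongDual ℝ V) : (V →L[ℝ] V) →L[ℝ] (V →L[ℝ] V) :=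
  (β.symm.arrowCongr β.symm : (StrongDual ℝ V →L[ℝ] StrongDual ℝ V) →L[ℝ] (V →L[ℝ] V)) ∘L
    (ContinuousLinearMap.compL ℝ V V ℝ).flip

variable (β : V ≃L[ℝ] StrongDual ℝ V)

lemma apply_formAdjoint_apply (T : V →L[ℝ] V) (x y : V) : β (formAdjoint β T x) y = β x (T y) := by
  simp [formAdjoint]

lemma formAdjoint_eq_iff {S T : V →L[ℝ] V} :
    formAdjoint β T = S ↔ ∀ x y, β (S x) y = β x (T y) := by
  refine ⟨fun h x y => h ▸ apply_formAdjoint_apply β T x y, fun h => ?_⟩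
  ext x
  refine β.injective (ContinuousLinearMap.ext fun y => ?_)
  rw [apply_formAdjoint_apply, h]

lemma formAdjoint_one : formAdjoint β 1 = 1 :=
  (formAdjoint_eq_iff β).2 fun _ _ => rfl

lemma formAdjoint_mul (S T : V →L[ℝ] V) :
    formAdjoint β (S * T) = formAdjoint β T * formAdjoint β S :=
  (formAdjoint_eq_iff β).2 fun x y => by
    simp only [mul_apply_eq_comp, apply_formAdjoint_apply]

lemma apply_map_map_of_formAdjoint_mul_eq_one {T : V →L[ℝ] V} (hT : formAdjoint β T * T = 1)
    (x y : V) : β (T x) (T y) = β x y := by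
  rw [← apply_formAdjoint_apply, ← mul_apply_eq_comp, hT, one_apply_eq_self]

end FormAdjoint

section Minkowski

/-- The Minkowski form as the isomorphism `x ↦ mink x ·` onto the dual: the Euclidean Riesz
isomorphism precomposed with the reflection that negates the last coordinate. -/
def minkDual (n : ℕ) : E n ≃L[ℝ] StrongDual ℝ (E n) :=
  ((LinearIsometryEquiv.piLpCongrRight 2 fun i =>
    if i = Fin.last (n + 1) then LinearIsometryEquiv.neg ℝ else LinearIsometryEquiv.refl ℝ ℝ).trans
      (InnerProductSpace.toDual ℝ (E n))).toContinuousLinearEquiv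

lemma minkDual_apply_apply (x y : E n) : minkDual n x y = mink x y := by
  simp only [minkDual, LinearIsometryEquiv.coe_toContinuousLinearEquiv,
    LinearIsometryEquiv.trans_apply, InnerProductSpace.toDual_apply_apply, PiLp.inner_apply, mink]
  refine Finset.sum_congr rfl fun i _ => ?_
  rw [LinearIsometryEquiv.piLpCongrRight_apply]
  by_cases hi : i = Fin.last (n + 1)
  · simp [hi, mul_comm]
  · simp [hi, mul_comm]

end Minkowski

theorem stmt7_general {V : Type*} [NormedAddCommGroup V] [NormedSpace ℝ V] [CompleteSpace V]
    {a b p : ℝ} {Φ G : ℝ → V →L[ℝ] V} {B : ℝ → ℝ} (hB : IntegrableOn B (Ioo a b))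
    (hΦ : ∀ t ∈ Ioo a b, ‖Φ t‖ ≤ B t) (hp : p ∈ Ioo a b)
    (hG : ∀ t ∈ Ioo a b, HasDerivAt G (G t * Φ t) t) (hGp : G p = 1)
    (β : V ≃L[ℝ] StrongDual ℝ V) :
    (∃ L : V →L[ℝ] V, Tendsto G (𝓝[>] a) (𝓝 L) ∧
      ((∀ t ∈ Ioo a b, ∀ x y : V, β (Φ t x) y = -β x (Φ t y)) →
        (∀ x y : V, β (L x) (L y) = β x y) ∧ Function.Bijective L)) ∧
    ∀ t ∈ Ioc a p, ‖G t - 1‖ ≤ Real.exp (∫ τ in t..p, B τ) - 1 := by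
  have hsub : Ioc a p ⊆ Ioo a b := Ioc_subset_Ioo_right hp.2
  have hBp : IntegrableOn B (Ioc a p) := hB.mono_set hsub
  obtain ⟨L, hL⟩ := exists_tendsto_nhdsGT_of_hasDerivAt_mul hp.1 hBp
    (fun t ht => hΦ t (hsub ht)) (fun t ht => hG t (hsub ht))
  refine ⟨⟨L, hL, fun hskew => ?_⟩, fun t ht => ?_⟩
  · obtain ⟨hright, hleft⟩ := mul_map_eq_one_and_map_mul_eq_one_of_tendsto hp.1 hBp
      (fun t ht => hΦ t (hsub ht)) (fun t ht => hG t (hsub ht)) hGp hL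
      (formAdjoint_mul β) (formAdjoint_one β) fun t ht =>
        (formAdjoint_eq_iff β).2 fun x y => by simp [hskew t (hsub ht)]
    exact ⟨apply_map_map_of_formAdjoint_mul_eq_one β hleft, Function.bijective_iff_has_inverse.2
      ⟨formAdjoint β L, DFunLike.congr_fun hleft, DFunLike.congr_fun hright⟩⟩
  · have hIcc : Icc t p ⊆ Ioo a b := Icc_subset_Ioo ht.1 hp.2
    exact norm_sub_one_le_exp_integral_sub_one ht.2
      ((intervalIntegrable_iff_integrableOn_Icc_of_le ht.2).2 (hB.mono_set hIcc))
      (fun τ hτ => hΦ τ (hIcc hτ)) (fun τ hτ => hG τ (hIcc hτ)) hGp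

/-- Corollary 3.3: continuity at the singularity of primitives with
integrably bounded coefficient. -/
theorem stmt7 {n : ℕ} (b : ℝ) (hb : 0 < b)
    (Φ : ℝ → E n →L[ℝ] E n) (B : ℝ → ℝ)
    (hΦc : ContinuousOn Φ (Set.Ioo 0 b))
    (hBint : IntegrableOn B (Set.Ioo 0 b))
    (hbound : ∀ t ∈ Set.Ioo (0:ℝ) b, ‖Φ t‖ ≤ B t)
    (p : ℝ) (hp : p ∈ Set.Ioo (0:ℝ) b)
    (G : ℝ → E n →L[ℝ] E n)
    (hG : ∀ t ∈ Set.Ioo (0:ℝ) b, HasDerivAt G (G t * Φ t) t)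
    (hGp : G p = 1) :
    (∃ L : E n →L[ℝ] E n, Tendsto G (𝓝[>] 0) (𝓝 L) ∧
      ((∀ t ∈ Set.Ioo (0:ℝ) b, ∀ x y : E n, mink (Φ t x) y = - mink x (Φ t y)) →
        (∀ x y : E n, mink (L x) (L y) = mink x y) ∧ Function.Bijective L)) ∧
    ∀ t ∈ Set.Ioc (0:ℝ) p, ‖G t - 1‖ ≤ Real.exp (∫ τ in t..p, B τ) - 1 := by
  simpa only [minkDual_apply_apply] using stmt7_general hBint hbound hp hG hGp (minkDual n)
end
end

section
/- Let b > 0, let v₀ ∈ ℝ^{n+2} be null and nonzero, let w̃ satisfy ⟨v₀,w̃⟩ = 0 and ‖w̃‖² > 0, and let Δ:(0,b) → End(ℝ^{n+2}) be continuous and bounded with each Δ(t) skew-adjoint with respect to the Minkowski form. Define Ω(t) := −(1/t)·(v₀∧w̃) + Δ(t), and for each p ∈ (0,b) let G_p:(0,b) → End(ℝ^{n+2}) be differentiable with G_p′(t) = G_p(t)∘Ω(t) and G_p(p) = id (each G_p(t) then preserves the Minkowski form, hence is invertible). Then there is a continuous map k:[0,b) → ℝ^{n+2} with k(t) null and nonzero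 for every t and k(0) = −(‖w̃‖²/2)·v₀, such that for every p ∈ (0,b): (1 + (ln(t/p))²)^{−1}·G_p(t) converges to the rank-one endomorphism k(p)v₀* as t → 0⁺, and k(t) = G_p(t)^{−1}(k(p)) for all p,t ∈ (0,b). -/
/-!
Put `N = v₀ ∧ w`, so that `N³ = 0`, `N v₀ = 0` and `N² = -⟨w, w⟩ v₀ v₀*`. Gauging by
`t ^ N = exp (log t • N)` removes the pole: `V(t) = G_p(t) t ^ N` satisfies `V' = V A` with
`A = t ^ (-N) Δ t ^ N`, which is `O(t ^ (-1/2))` because `t ^ (±N)` only grows like a power of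
`log t`. Hence `V(t)` converges to some `H_p` as `t → 0`. The inverse `W = V⁻¹` solves `W' = -A W`,
so it converges as well, with rate `O(t ^ (1/2))`; thus `H_p` is invertible, and
`H_q - q ^ N = q ^ N (W(q) H_p - 1)` tends to `0` as `q → 0`.

Consequently `G_p(t) = V(t) t ^ (-N)` grows like `H_p (log² t / 2) N²`, which gives the limit with
`k(p) = -(⟨w, w⟩ / 2) H_p v₀`. This is a parallel section which extends continuously to `0` because
`q ^ N v₀ = v₀`, and its square norm, constant by skewness, is that of its value at `0`.
-/

open scoped BigOperators Topology
open Filter Set MeasureTheory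

noncomputable section

variable {n : ℕ}

lemma exists_dist_le_of_lipschitzOnWith_of_mem_closure {α β : Type*} [PseudoMetricSpace α]
    [PseudoMetricSpace β] [CompleteSpace β] {f : α → β} {s : Set α} {L : NNReal} {x : α}
    (hf : LipschitzOnWith L f s) (hx : x ∈ closure s) :
    ∃ y, ∀ z ∈ s, dist (f z) y ≤ L * dist z x := by
  have : (𝓝[s] x).NeBot := mem_closure_iff_nhdsWithin_neBot.mp hx
  have hcauchy : Cauchy (map f (𝓝[s] x)) :=
    (cauchy_nhds.mono nhdsWithin_le_nhds).map_of_le hf.uniformContinuousOn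
      inf_le_right
  obtain ⟨y, hy⟩ := CompleteSpace.complete hcauchy
  refine ⟨y, fun z hz => le_of_tendsto_of_tendsto (tendsto_const_nhds.dist hy)
    ((tendsto_const_nhds.dist tendsto_id).const_mul (L : ℝ) |>.mono_left nhdsWithin_le_nhds) ?_⟩
  filter_upwards [self_mem_nhdsWithin] with u hu using hf.dist_le_mul z hz u hu

section Limit

variable {F : Type*} [NormedAddCommGroup F] [NormedSpace ℝ F] {X X' : ℝ → F}

lemma norm_left_le_of_norm_deriv_le {c a K : ℝ} (hca : c ≤ a)
    (hX : ∀ t ∈ Icc c a, HasDerivAt X (X' t) t) (hX' : ∀ t ∈ Icc c a, ‖X' t‖ ≤ K * ‖X t‖) :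
    ‖X c‖ ≤ ‖X a‖ * Real.exp (K * (a - c)) := by
  have hmem : ∀ x ∈ Icc (-a) (-c), -x ∈ Icc c a := fun x hx =>
    ⟨le_neg_of_le_neg hx.2, neg_le_of_neg_le hx.1⟩
  have hderiv : ∀ x ∈ Icc (-a) (-c), HasDerivAt (fun x => X (-x)) (-X' (-x)) x := fun x hx => by
    simpa [Function.comp_def] using (hX _ (hmem x hx)).scomp x (hasDerivAt_neg x)
  have hgronwall := norm_le_gronwallBound_of_norm_deriv_right_le (δ := ‖X a‖) (K := K) (ε := 0)
    (HasDerivAt.continuousOn hderiv)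
    (fun x hx => (hderiv x (Ico_subset_Icc_self hx)).hasDerivWithinAt) (by simp)
    (fun x hx => by simpa using hX' _ (hmem x (Ico_subset_Icc_self hx))) (-c)
    ⟨neg_le_neg hca, le_rfl⟩
  simpa [gronwallBound_ε0, neg_add_eq_sub] using hgronwall

variable [CompleteSpace F]

lemma exists_sub_isBigO_id_of_deriv_isBigO
    (hX : ∀ᶠ t in 𝓝[>] 0, HasDerivAt X (X' t) t) (hX' : X' =O[𝓝[>] 0] X) :
    ∃ X₀, (fun t => X t - X₀) =O[𝓝[>] 0] fun t => t := by
  obtain ⟨K, hK, hbound⟩ := hX'.exists_nonneg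
  obtain ⟨a, ha, hgood⟩ := mem_nhdsGT_iff_exists_Ioc_subset.mp (hX.and hbound.bound)
  rw [mem_Ioi] at ha
  have hbdd : ∀ t ∈ Ioc 0 a, ‖X t‖ ≤ ‖X a‖ * Real.exp (K * a) := fun t ht => by
    have hsub : Icc t a ⊆ Ioc 0 a := fun u hu => ⟨ht.1.trans_le hu.1, hu.2⟩
    refine (norm_left_le_of_norm_deriv_le ht.2 (fun u hu => (hgood (hsub hu)).1)
      fun u hu => (hgood (hsub hu)).2).trans ?_
    gcongr
    linarith [ht.1]
  have hlip : LipschitzOnWith (K * (‖X a‖ * Real.exp (K * a))).toNNReal X (Ioc 0 a) := by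
    refine (convex_Ioc 0 a).lipschitzOnWith_of_nnnorm_hasDerivWithin_le (f' := X')
      (fun t ht => (hgood ht).1.hasDerivWithinAt) fun t ht => ?_
    rw [← NNReal.coe_le_coe, coe_nnnorm, Real.coe_toNNReal _ (by positivity)]
    exact (hgood ht).2.trans (mul_le_mul_of_nonneg_left (hbdd t ht) hK)
  obtain ⟨X₀, hX₀⟩ := exists_dist_le_of_lipschitzOnWith_of_mem_closure hlip
    (x := 0) (by simp [closure_Ioc ha.ne, ha.le])
  refine ⟨X₀, .of_bound (K * (‖X a‖ * Real.exp (K * a))).toNNReal ?_⟩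
  filter_upwards [Ioc_mem_nhdsGT ha] with t ht
  simpa [dist_eq_norm] using hX₀ t ht

lemma tendsto_rpow_nhdsGT_zero {r : ℝ} (hr : 0 < r) :
    Tendsto (fun t : ℝ => t ^ r) (𝓝[>] 0) (𝓝[>] 0) := by
  refine tendsto_nhdsWithin_iff.mpr ⟨?_, ?_⟩
  · simpa [Real.zero_rpow hr.ne'] using
      (Real.continuousAt_rpow_const 0 r (.inr hr.le)).tendsto.mono_left nhdsWithin_le_nhds
  · filter_upwards [self_mem_nhdsWithin] with t ht using Real.rpow_pos_of_pos ht r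

lemma exists_sub_isBigO_rpow_of_deriv_isBigO {r : ℝ} (hr : 0 < r)
    (hX : ∀ᶠ t in 𝓝[>] 0, HasDerivAt X (X' t) t)
    (hX' : X' =O[𝓝[>] 0] fun t => t ^ (r - 1) * ‖X t‖) :
    ∃ X₀, (fun t => X t - X₀) =O[𝓝[>] 0] fun t => t ^ r := by
  -- The substitution `t = s ^ (1 / r)` absorbs the integrable singularity `t ^ (r - 1)`.
  have hsub := tendsto_rpow_nhdsGT_zero (inv_pos.mpr hr)
  have hderiv : ∀ᶠ s in 𝓝[>] 0, HasDerivAt (fun s => X (s ^ r⁻¹))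
      ((r⁻¹ * s ^ (r⁻¹ - 1)) • X' (s ^ r⁻¹)) s := by
    filter_upwards [hsub.eventually hX, self_mem_nhdsWithin] with s hs hs₀
    exact hs.scomp s (Real.hasDerivAt_rpow_const (.inl (ne_of_gt hs₀)))
  have hbound : (fun s => (r⁻¹ * s ^ (r⁻¹ - 1)) • X' (s ^ r⁻¹)) =O[𝓝[>] 0]
      fun s => X (s ^ r⁻¹) := by
    refine ((Asymptotics.isBigO_refl (fun s : ℝ => r⁻¹ * s ^ (r⁻¹ - 1)) _).smul
      (hX'.comp_tendsto hsub)).trans (.of_bound r⁻¹ ?_)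
    filter_upwards [self_mem_nhdsWithin] with s (hs : 0 < s)
    have hpow : s ^ (r⁻¹ - 1) * (s ^ r⁻¹) ^ (r - 1) = 1 := by
      rw [← Real.rpow_mul hs.le, ← Real.rpow_add hs,
        show r⁻¹ - 1 + r⁻¹ * (r - 1) = 0 by field_simp; ring, Real.rpow_zero]
    simp only [Function.comp_apply, smul_eq_mul]
    rw [← mul_assoc, mul_assoc r⁻¹, hpow, mul_one, norm_mul, norm_norm,
      Real.norm_of_nonneg (inv_nonneg.mpr hr.le)]
  obtain ⟨X₀, hX₀⟩ := exists_sub_isBigO_id_of_deriv_isBigO hderiv hbound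
  refine ⟨X₀, (hX₀.comp_tendsto (tendsto_rpow_nhdsGT_zero hr)).congr' ?_ .rfl⟩
  filter_upwards [self_mem_nhdsWithin] with t (ht : 0 < t)
  simp only [Function.comp_apply, Real.rpow_rpow_inv ht.le hr.ne']

end Limit

section NormalizedPrimitive

variable {R : Type*} [NormedRing R] [NormedAlgebra ℝ R] {s : Set ℝ} {Ω : ℝ → R}

lemma eqOn_of_hasDerivAt_mul [s.OrdConnected] {X Y : ℝ → R}
    (hΩ : ∀ c ∈ s, ∀ d ∈ s, Bornology.IsBounded (Ω '' Icc c d))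
    (hX : ∀ t ∈ s, HasDerivAt X (X t * Ω t) t) (hY : ∀ t ∈ s, HasDerivAt Y (Y t * Ω t) t)
    {q : ℝ} (hq : q ∈ s) (hXY : X q = Y q) : EqOn X Y s := by
  have hlip : ∀ c ∈ s, ∀ d ∈ s, ∃ K : NNReal, ∀ t ∈ Icc c d,
      LipschitzOnWith K (fun x => x * Ω t) univ := fun c hc d hd => by
    obtain ⟨K, hK⟩ := (hΩ c hc d hd).exists_norm_le
    refine ⟨K.toNNReal, fun t ht => .of_dist_le_mul fun x _ y _ => ?_⟩
    rw [dist_eq_norm, dist_eq_norm, ← sub_mul, mul_comm]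
    exact (norm_mul_le _ _).trans (mul_le_mul_of_nonneg_left
      ((hK _ (mem_image_of_mem Ω ht)).trans K.le_coe_toNNReal) (norm_nonneg _))
  intro t ht
  rcases le_total q t with hqt | htq
  · obtain ⟨K, hK⟩ := hlip q hq t ht
    have hsub : Icc q t ⊆ s := s.Icc_subset hq ht
    exact ODE_solution_unique_of_mem_Icc_right (v := fun t x => x * Ω t)
      (fun u hu => hK u (Ico_subset_Icc_self hu))
      (HasDerivAt.continuousOn fun u hu => hX u (hsub hu))
      (fun u hu => (hX u (hsub (Ico_subset_Icc_self hu))).hasDerivWithinAt) (fun _ _ => mem_univ _)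
      (HasDerivAt.continuousOn fun u hu => hY u (hsub hu))
      (fun u hu => (hY u (hsub (Ico_subset_Icc_self hu))).hasDerivWithinAt) (fun _ _ => mem_univ _)
      hXY ⟨hqt, le_rfl⟩
  · obtain ⟨K, hK⟩ := hlip t ht q hq
    have hsub : Icc t q ⊆ s := s.Icc_subset ht hq
    exact ODE_solution_unique_of_mem_Icc_left (v := fun t x => x * Ω t)
      (fun u hu => hK u (Ioc_subset_Icc_self hu))
      (HasDerivAt.continuousOn fun u hu => hX u (hsub hu))
      (fun u hu => (hX u (hsub (Ioc_subset_Icc_self hu))).hasDerivWithinAt) (fun _ _ => mem_univ _)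
      (HasDerivAt.continuousOn fun u hu => hY u (hsub hu))
      (fun u hu => (hY u (hsub (Ioc_subset_Icc_self hu))).hasDerivWithinAt) (fun _ _ => mem_univ _)
      hXY ⟨le_rfl, htq⟩

/-- The primitives `G p` of `Ω` on `s` (solutions of `X' = X Ω`), one for each base point `p` at
which `G p` is normalized to `1`. The form `Ω` is only required to be bounded on compact
subintervals of `s`, which is the regularity that uniqueness of primitives needs. -/
structure IsNormalizedPrimitive (s : Set ℝ) (Ω : ℝ → R) (G : ℝ → ℝ → R) : Prop where
  isBounded_image : ∀ c ∈ s, ∀ d ∈ s, Bornology.IsBounded (Ω '' Icc c d)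
  hasDerivAt : ∀ p ∈ s, ∀ t ∈ s, HasDerivAt (G p) (G p t * Ω t) t
  apply_self : ∀ p ∈ s, G p p = 1

namespace IsNormalizedPrimitive

variable [s.OrdConnected] {G : ℝ → ℝ → R} (hG : IsNormalizedPrimitive s Ω G) {p q t : ℝ}
include hG

lemma mul_apply (hp : p ∈ s) (hq : q ∈ s) (ht : t ∈ s) : G p q * G q t = G p t := by
  refine eqOn_of_hasDerivAt_mul (X := fun t => G p q * G q t) hG.isBounded_image (fun t ht => ?_)
    (hG.hasDerivAt p hp) hq ?_ ht
  · simpa only [mul_assoc] using (hG.hasDerivAt q hq t ht).const_mul (G p q)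
  · rw [hG.apply_self q hq, mul_one]

lemma mul_apply_swap (hp : p ∈ s) (hq : q ∈ s) : G p q * G q p = 1 := by
  rw [hG.mul_apply hp hq hp, hG.apply_self p hp]

lemma inverse_apply (hp : p ∈ s) (hq : q ∈ s) : Ring.inverse (G p q) = G q p :=
  Ring.inverse_unit ⟨G p q, G q p, hG.mul_apply_swap hp hq, hG.mul_apply_swap hq hp⟩

lemma hasDerivAt_left [CompleteSpace R] (hs : IsOpen s) (hp : p ∈ s) (ht : t ∈ s) :
    HasDerivAt (fun p => G p t) (-(Ω p * G p t)) p := by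
  let u : Rˣ := ⟨G t p, G p t, hG.mul_apply_swap ht hp, hG.mul_apply_swap hp ht⟩
  have hinv : HasDerivAt (fun p => Ring.inverse (G t p)) (-(Ω p * G p t)) p := by
    have := (hasFDerivAt_ringInverse (𝕜 := ℝ) u).comp_hasDerivAt p (hG.hasDerivAt t ht p hp)
    refine this.congr_deriv ?_
    simp [u, ← mul_assoc, hG.mul_apply_swap hp ht]
  refine hinv.congr_of_eventuallyEq ?_
  filter_upwards [hs.mem_nhds hp] with q hq using (hG.inverse_apply ht hq).symm

end IsNormalizedPrimitive

end NormalizedPrimitive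

section EulerPow

variable {R : Type*} [NormedRing R] [NormedAlgebra ℝ R] {N : R} {r : ℝ}

lemma exp_smul_eq_sum_of_pow_eq_zero {k : ℕ} (hN : N ^ k = 0) (x : ℝ) :
    NormedSpace.exp (x • N) = ∑ i ∈ Finset.range k, (x ^ i / i.factorial) • N ^ i := by
  rw [NormedSpace.exp_eq_tsum ℝ]
  refine (tsum_eq_sum (s := Finset.range k) fun i hi => ?_).trans
    (Finset.sum_congr rfl fun i _ => ?_)
  · rw [smul_pow, pow_eq_zero_of_le (by simpa using hi) hN, smul_zero, smul_zero]
  · rw [smul_pow, smul_smul, inv_mul_eq_div]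

lemma tendsto_inv_pow_smul_exp_smul {k : ℕ} (hN : N ^ (k + 1) = 0) :
    Tendsto (fun x : ℝ => (x ^ k)⁻¹ • NormedSpace.exp (x • N)) atTop
      (𝓝 ((k.factorial : ℝ)⁻¹ • N ^ k)) := by
  have hlower : ∀ i ∈ Finset.range k,
      Tendsto (fun x : ℝ => (x ^ i / x ^ k * (i.factorial : ℝ)⁻¹) • N ^ i) atTop (𝓝 0) :=
    fun i hi => by
      simpa using ((tendsto_pow_div_pow_atTop_zero (Finset.mem_range.mp hi)).mul_const
        (i.factorial : ℝ)⁻¹).smul_const (N ^ i)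
  have hsum := (tendsto_finsetSum _ hlower).add_const ((k.factorial : ℝ)⁻¹ • N ^ k)
  rw [Finset.sum_const_zero, zero_add] at hsum
  refine hsum.congr' ?_
  filter_upwards [eventually_ne_atTop 0] with x hx
  rw [exp_smul_eq_sum_of_pow_eq_zero hN, Finset.sum_range_succ, smul_add, Finset.smul_sum]
  congr 1
  · refine Finset.sum_congr rfl fun i _ => ?_
    rw [smul_smul]
    ring_nf
  · rw [smul_smul, inv_mul_eq_div, div_div_cancel_left' (pow_ne_zero k hx)]

/-- The power `t ^ N = exp (log t • N)` for `0 < t`, the primitive of the Euler form `t⁻¹ • N`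
normalized at `1`. -/
def eulerPow (N : R) (t : ℝ) : R :=
  NormedSpace.exp (Real.log t • N)

lemma isBigO_eulerPow (hN : IsNilpotent N) (hr : 0 < r) :
    eulerPow N =O[𝓝[>] 0] fun t => t ^ (-r) := by
  obtain ⟨k, hk⟩ := hN
  have hsum : eulerPow N = fun t =>
      ∑ i ∈ Finset.range k, ((i.factorial : ℝ)⁻¹ * Real.log t ^ i) • N ^ i := by
    ext1 t
    simp only [eulerPow, exp_smul_eq_sum_of_pow_eq_zero hk, inv_mul_eq_div]
  have hlog : ∀ i : ℕ, (fun t => Real.log t ^ i) =O[𝓝[>] 0] fun t => t ^ (-r) := fun i => by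
    refine .of_norm_left ?_
    simpa using (isLittleO_abs_log_rpow_rpow_nhdsGT_zero i (neg_neg_of_pos hr)).isBigO
  rw [hsum]
  refine .fun_sum fun i _ => ?_
  simpa using ((hlog i).const_mul_left _).smul
    (Asymptotics.isBigO_const_const (N ^ i) (one_ne_zero (α := ℝ)) _)

lemma isBigO_eulerPow_neg_mul_mul_eulerPow {Δ : ℝ → R} (hN : IsNilpotent N) (hr : 0 < r)
    (hΔ : Δ =O[𝓝[>] 0] fun _ => (1 : ℝ)) :
    (fun t => eulerPow (-N) t * Δ t * eulerPow N t) =O[𝓝[>] 0] fun t => t ^ (-r) := by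
  refine (((isBigO_eulerPow hN.neg (half_pos hr)).mul hΔ).mul
    (isBigO_eulerPow hN (half_pos hr))).congr' .rfl ?_
  filter_upwards [self_mem_nhdsWithin] with t (ht : 0 < t)
  rw [mul_one, ← Real.rpow_add ht]
  congr 1
  ring

variable [CompleteSpace R]

lemma exp_add_smul (N : R) (x y : ℝ) :
    NormedSpace.exp ((x + y) • N) = NormedSpace.exp (x • N) * NormedSpace.exp (y • N) := by
  let : NormedAlgebra ℚ R := .restrictScalars ℚ ℝ R
  rw [add_smul, NormedSpace.exp_add_of_commute (((Commute.refl N).smul_left x).smul_right y)]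

lemma eulerPow_mul_eulerPow_neg (N : R) (t : ℝ) : eulerPow N t * eulerPow (-N) t = 1 := by
  rw [eulerPow, eulerPow, smul_neg, ← neg_smul, ← exp_add_smul, add_neg_cancel, zero_smul,
    NormedSpace.exp_zero]

lemma eulerPow_neg_mul_eulerPow (N : R) (t : ℝ) : eulerPow (-N) t * eulerPow N t = 1 := by
  simpa using eulerPow_mul_eulerPow_neg (-N) t

lemma hasDerivAt_eulerPow (N : R) {t : ℝ} (ht : t ≠ 0) :
    HasDerivAt (eulerPow N) (t⁻¹ • (N * eulerPow N t)) t :=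
  (hasDerivAt_exp_smul_const' N (Real.log t)).scomp t (Real.hasDerivAt_log ht)

lemma hasDerivAt_eulerPow' (N : R) {t : ℝ} (ht : t ≠ 0) :
    HasDerivAt (eulerPow N) (t⁻¹ • (eulerPow N t * N)) t :=
  (hasDerivAt_exp_smul_const N (Real.log t)).scomp t (Real.hasDerivAt_log ht)

end EulerPow

section PoleForm

variable {R : Type*} [NormedRing R] [NormedAlgebra ℝ R] {N : R} {Δ : ℝ → R} {b : ℝ}

/-- The form on `(0, b)` with a pole of first order at `0`, residue `-N` and remainder `Δ`. -/
def poleForm (N : R) (Δ : ℝ → R) (t : ℝ) : R :=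
  (-t⁻¹) • N + Δ t

lemma isBounded_image_poleForm (hΔ : Bornology.IsBounded (Δ '' Ioo 0 b)) {c d : ℝ}
    (hc : c ∈ Ioo 0 b) (hd : d ∈ Ioo 0 b) :
    Bornology.IsBounded (poleForm N Δ '' Icc c d) := by
  obtain ⟨D, hD⟩ := hΔ.exists_norm_le
  refine isBounded_iff_forall_norm_le.mpr ⟨c⁻¹ * ‖N‖ + D, ?_⟩
  rintro _ ⟨t, ht, rfl⟩
  have ht₀ : 0 < t := hc.1.trans_le ht.1
  refine norm_add_le_of_le ?_ (hD _ ⟨t, ⟨ht₀, ht.2.trans_lt hd.2⟩, rfl⟩)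
  rw [norm_smul, norm_neg, norm_inv, Real.norm_of_nonneg ht₀.le]
  gcongr
  exacts [hc.1, ht.1]

lemma tendsto_sq_div_one_add_add_sq (c : ℝ) :
    Tendsto (fun x : ℝ => x ^ 2 / (1 + (x + c) ^ 2)) atTop (𝓝 1) := by
  have hcont : ContinuousAt (fun u : ℝ => (u ^ 2 + (1 + c * u) ^ 2)⁻¹) 0 := by
    fun_prop (disch := norm_num)
  have hlim := hcont.tendsto.comp tendsto_inv_atTop_zero
  simp only [ne_eq, OfNat.ofNat_ne_zero, not_false_eq_true, zero_pow, mul_zero, add_zero, one_pow,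
    zero_add, inv_one] at hlim
  refine hlim.congr' ?_
  filter_upwards [eventually_ne_atTop 0] with x hx
  rw [Function.comp_apply]
  field_simp

/-- The regularized value `lim g(t) t ^ N` at the singularity of a primitive `g` of
`poleForm N Δ`: near `0`, the primitive looks like `frobeniusFactor N g * t ^ (-N)`. A junk value
if the limit does not exist. -/
def frobeniusFactor (N : R) (g : ℝ → R) : R :=
  limUnder (𝓝[>] 0) fun t => g t * eulerPow N t

namespace IsNormalizedPrimitive

variable [CompleteSpace R] {G : ℝ → ℝ → R} (hG : IsNormalizedPrimitive (Ioo 0 b) (poleForm N Δ) G)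
  {p q t : ℝ}
include hG

lemma hasDerivAt_mul_eulerPow (hp : p ∈ Ioo 0 b) (ht : t ∈ Ioo 0 b) :
    HasDerivAt (fun t => G p t * eulerPow N t)
      (G p t * eulerPow N t * (eulerPow (-N) t * Δ t * eulerPow N t)) t := by
  refine ((hG.hasDerivAt p hp t ht).mul (hasDerivAt_eulerPow N ht.1.ne')).congr_deriv ?_
  calc G p t * poleForm N Δ t * eulerPow N t + G p t * (t⁻¹ • (N * eulerPow N t))
    _ = G p t * (Δ t * eulerPow N t) := by
      simp only [poleForm, mul_add, add_mul, neg_smul, mul_neg, neg_mul, mul_smul_comm,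
        smul_mul_assoc, mul_assoc]
      abel
    _ = G p t * (eulerPow N t * eulerPow (-N) t * (Δ t * eulerPow N t)) := by
      rw [eulerPow_mul_eulerPow_neg, one_mul]
    _ = _ := by simp only [mul_assoc]

lemma hasDerivAt_eulerPow_neg_mul (hp : p ∈ Ioo 0 b) (ht : t ∈ Ioo 0 b) :
    HasDerivAt (fun t => eulerPow (-N) t * G t p)
      (-(eulerPow (-N) t * Δ t * eulerPow N t * (eulerPow (-N) t * G t p))) t := by
  refine ((hasDerivAt_eulerPow' (-N) ht.1.ne').mul
    (hG.hasDerivAt_left isOpen_Ioo ht hp)).congr_deriv ?_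
  calc t⁻¹ • (eulerPow (-N) t * -N) * G t p + eulerPow (-N) t * -(poleForm N Δ t * G t p)
    _ = -(eulerPow (-N) t * Δ t * G t p) := by
      simp only [poleForm, mul_add, add_mul, neg_smul, mul_neg, neg_mul, mul_smul_comm,
        smul_mul_assoc, mul_assoc, smul_neg]
      abel
    _ = -(eulerPow (-N) t * Δ t * (eulerPow N t * eulerPow (-N) t) * G t p) := by
      rw [eulerPow_mul_eulerPow_neg, mul_one]
    _ = _ := by simp only [mul_assoc]

variable (hN : IsNilpotent N) (hΔ : Δ =O[𝓝[>] 0] fun _ => (1 : ℝ))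
include hN hΔ

lemma tendsto_frobeniusFactor (hp : p ∈ Ioo 0 b) :
    Tendsto (fun t => G p t * eulerPow N t) (𝓝[>] 0) (𝓝 (frobeniusFactor N (G p))) := by
  have hconj := isBigO_eulerPow_neg_mul_mul_eulerPow hN one_half_pos hΔ
  obtain ⟨H, hH⟩ := exists_sub_isBigO_rpow_of_deriv_isBigO (r := 1 / 2) one_half_pos
    (X := fun t => G p t * eulerPow N t)
    (by filter_upwards [Ioo_mem_nhdsGT (hp.1.trans hp.2)] with t ht
          using hG.hasDerivAt_mul_eulerPow hp ht)
    (((Asymptotics.isBigO_refl _ _).norm_right.mul hconj).congr_right fun t => by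
      rw [mul_comm]; norm_num)
  refine tendsto_nhds_limUnder ⟨H, tendsto_sub_nhds_zero_iff.mp (hH.trans_tendsto ?_)⟩
  exact (tendsto_rpow_nhdsGT_zero one_half_pos).mono_right nhdsWithin_le_nhds

lemma mul_frobeniusFactor (hp : p ∈ Ioo 0 b) (hq : q ∈ Ioo 0 b) :
    G p q * frobeniusFactor N (G q) = frobeniusFactor N (G p) := by
  refine tendsto_nhds_unique ?_ (hG.tendsto_frobeniusFactor hN hΔ hp)
  refine ((hG.tendsto_frobeniusFactor hN hΔ hq).const_mul (G p q)).congr' ?_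
  filter_upwards [Ioo_mem_nhdsGT (hp.1.trans hp.2)] with t ht
  rw [← mul_assoc, hG.mul_apply hp hq ht]

lemma exists_unit_eq_frobeniusFactor (hp : p ∈ Ioo 0 b) :
    ∃ u : Rˣ, (u : R) = frobeniusFactor N (G p) ∧
      (fun t => eulerPow (-N) t * G t p - ↑u⁻¹) =O[𝓝[>] 0] fun t => t ^ (1 / 2 : ℝ) := by
  have hmem : ∀ᶠ t in 𝓝[>] (0 : ℝ), t ∈ Ioo 0 b := Ioo_mem_nhdsGT (hp.1.trans hp.2)
  have hconj := isBigO_eulerPow_neg_mul_mul_eulerPow hN one_half_pos hΔ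
  obtain ⟨K, hK⟩ := exists_sub_isBigO_rpow_of_deriv_isBigO (r := 1 / 2) one_half_pos
    (X := fun t => eulerPow (-N) t * G t p)
    (by filter_upwards [hmem] with t ht using hG.hasDerivAt_eulerPow_neg_mul hp ht)
    ((hconj.mul (Asymptotics.isBigO_refl _ _).norm_right).neg_left.congr_right fun t => by
      norm_num)
  have hK_lim : Tendsto (fun t => eulerPow (-N) t * G t p) (𝓝[>] 0) (𝓝 K) :=
    tendsto_sub_nhds_zero_iff.mp <| hK.trans_tendsto <|
      (tendsto_rpow_nhdsGT_zero one_half_pos).mono_right nhdsWithin_le_nhds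
  have hH_lim := hG.tendsto_frobeniusFactor hN hΔ hp
  refine ⟨⟨frobeniusFactor N (G p), K, ?_, ?_⟩, rfl, hK⟩
  · refine tendsto_nhds_unique_of_eventuallyEq (hH_lim.mul hK_lim) tendsto_const_nhds ?_
    filter_upwards [hmem] with t ht
    rw [mul_assoc, ← mul_assoc (eulerPow N t), eulerPow_mul_eulerPow_neg, one_mul,
      hG.mul_apply_swap hp ht]
  · refine tendsto_nhds_unique_of_eventuallyEq (hK_lim.mul hH_lim) tendsto_const_nhds ?_
    filter_upwards [hmem] with t ht
    rw [mul_assoc, ← mul_assoc (G t p), hG.mul_apply_swap ht hp, one_mul,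
      eulerPow_neg_mul_eulerPow]

lemma tendsto_frobeniusFactor_sub_eulerPow (hb : 0 < b) :
    Tendsto (fun q => frobeniusFactor N (G q) - eulerPow N q) (𝓝[>] 0) (𝓝 0) := by
  have hp : b / 2 ∈ Ioo 0 b := ⟨half_pos hb, half_lt_self hb⟩
  obtain ⟨u, hu, hinv⟩ := hG.exists_unit_eq_frobeniusFactor hN hΔ hp
  have hbound : (fun q => eulerPow N q * ((eulerPow (-N) q * G q (b / 2) - ↑u⁻¹) * u)) =O[𝓝[>] 0]
      fun q => q ^ (1 / 4 : ℝ) := by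
    refine ((isBigO_eulerPow hN (r := 1 / 4) (by norm_num)).mul
      (hinv.mul (Asymptotics.isBigO_const_const (u : R) (one_ne_zero (α := ℝ)) _))).congr' .rfl ?_
    filter_upwards [self_mem_nhdsWithin] with q (hq : 0 < q)
    rw [mul_one, ← Real.rpow_add hq]
    norm_num
  refine (hbound.trans_tendsto ((tendsto_rpow_nhdsGT_zero (by norm_num)).mono_right
    nhdsWithin_le_nhds)).congr' ?_
  filter_upwards [Ioo_mem_nhdsGT hb] with q hq
  rw [sub_mul, mul_sub, Units.inv_mul, mul_one, ← mul_assoc, ← mul_assoc,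
    eulerPow_mul_eulerPow_neg, one_mul, hu, hG.mul_frobeniusFactor hN hΔ hq hp]

lemma hasDerivAt_frobeniusFactor (hp : p ∈ Ioo 0 b) :
    HasDerivAt (fun p => frobeniusFactor N (G p))
      (-(poleForm N Δ p * frobeniusFactor N (G p))) p := by
  refine (((hG.hasDerivAt_left isOpen_Ioo hp hp).mul_const
    (frobeniusFactor N (G p))).congr_deriv ?_).congr_of_eventuallyEq ?_
  · rw [hG.apply_self p hp, mul_one, neg_mul]
  · filter_upwards [isOpen_Ioo.mem_nhds hp] with q hq
    rw [hG.mul_frobeniusFactor hN hΔ hq hp]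

end IsNormalizedPrimitive

lemma IsNormalizedPrimitive.tendsto_inv_one_add_log_sq_smul [CompleteSpace R] {G : ℝ → ℝ → R}
    (hG : IsNormalizedPrimitive (Ioo 0 b) (poleForm N Δ) G) (hN : N ^ 3 = 0)
    (hΔ : Δ =O[𝓝[>] 0] fun _ => (1 : ℝ)) {p : ℝ} (hp : p ∈ Ioo 0 b) :
    Tendsto (fun t => (1 + Real.log (t / p) ^ 2)⁻¹ • G p t) (𝓝[>] 0)
      (𝓝 (frobeniusFactor N (G p) * ((2 : ℝ)⁻¹ • N ^ 2))) := by
  have hlog : Tendsto (fun t => -Real.log t) (𝓝[>] 0) atTop :=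
    tendsto_neg_atBot_atTop.comp Real.tendsto_log_nhdsGT_zero
  have hratio := (tendsto_sq_div_one_add_add_sq (Real.log p)).comp hlog
  have hexp := (tendsto_inv_pow_smul_exp_smul (k := 2) hN).comp hlog
  have hlim := hratio.smul ((hG.tendsto_frobeniusFactor ⟨3, hN⟩ hΔ hp).mul hexp)
  rw [one_smul, Nat.factorial_two, Nat.cast_ofNat] at hlim
  refine hlim.congr' ?_
  filter_upwards [Ioo_mem_nhdsGT (hp.1.trans hp.2), hlog.eventually_ne_atTop 0] with t ht hlog₀
  have hexp_eq : NormedSpace.exp (-Real.log t • N) = eulerPow (-N) t := by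
    rw [eulerPow, smul_neg, neg_smul]
  simp only [Function.comp_apply, hexp_eq, mul_smul_comm, mul_assoc, eulerPow_mul_eulerPow_neg,
    mul_one, smul_smul, div_mul_eq_mul_div, mul_inv_cancel₀ (pow_ne_zero 2 hlog₀), one_div,
    Real.log_div ht.1.ne' hp.1.ne', neg_add_eq_sub, sub_sq_comm (Real.log p)]

end PoleForm

section BilinearForm

variable {V : Type*} [NormedAddCommGroup V] [NormedSpace ℝ V] {B : V →L[ℝ] V →L[ℝ] ℝ}

/-- The endomorphism `v ∧ w : x ↦ B(v, x) w - B(w, x) v` attached to a bilinear form `B`. -/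
def bilinWedge (B : V →L[ℝ] V →L[ℝ] ℝ) (v w : V) : V →L[ℝ] V :=
  (B v).smulRight w - (B w).smulRight v

lemma bilinWedge_apply (v w x : V) : bilinWedge B v w x = B v x • w - B w x • v := rfl

lemma bilinWedge_apply_left (hB : ∀ x y, B x y = B y x) {v w : V} (hv : B v v = 0)
    (hvw : B v w = 0) : bilinWedge B v w v = 0 := by
  rw [bilinWedge_apply, hv, hB w v, hvw, zero_smul, zero_smul, sub_zero]

lemma bilinWedge_apply_right {v w : V} (hvw : B v w = 0) :
    bilinWedge B v w w = -(B w w) • v := by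
  rw [bilinWedge_apply, hvw, zero_smul, zero_sub, neg_smul]

lemma bilinWedge_sq (hB : ∀ x y, B x y = B y x) {v w : V} (hv : B v v = 0) (hvw : B v w = 0) :
    bilinWedge B v w ^ 2 = -(B w w) • (B v).smulRight v := by
  ext x
  calc (bilinWedge B v w ^ 2) x
    _ = bilinWedge B v w (B v x • w - B w x • v) := rfl
    _ = B v x • -(B w w) • v := by
      rw [map_sub, map_smul, map_smul, bilinWedge_apply_right hvw, bilinWedge_apply_left hB hv hvw,
        smul_zero, sub_zero]
    _ = -(B w w) • B v x • v := smul_comm _ _ _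

lemma mul_half_bilinWedge_sq (hB : ∀ x y, B x y = B y x) {v w : V} (hv : B v v = 0)
    (hvw : B v w = 0) (A : V →L[ℝ] V) :
    A * ((2 : ℝ)⁻¹ • bilinWedge B v w ^ 2) = (B v).smulRight (A (-(B w w / 2) • v)) := by
  rw [bilinWedge_sq hB hv hvw, smul_smul, mul_neg, inv_mul_eq_div]
  ext x
  simp [smul_comm (B v x)]

lemma bilinWedge_pow_three (hB : ∀ x y, B x y = B y x) {v w : V} (hv : B v v = 0)
    (hvw : B v w = 0) : bilinWedge B v w ^ 3 = 0 := by
  ext x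
  simp [pow_succ' _ 2, bilinWedge_sq hB hv hvw, bilinWedge_apply_left hB hv hvw]

lemma bilinWedge_skew (hB : ∀ x y, B x y = B y x) (v w x y : V) :
    B (bilinWedge B v w x) y = -B x (bilinWedge B v w y) := by
  simp only [bilinWedge_apply, map_sub, map_smul, sub_apply,
    smul_apply, smul_eq_mul, hB x v, hB x w]
  ring

lemma poleForm_skew {N : V →L[ℝ] V} {Δ : ℝ → V →L[ℝ] V} {t : ℝ}
    (hN : ∀ x y, B (N x) y = -B x (N y)) (hΔ : ∀ x y, B (Δ t x) y = -B x (Δ t y)) (x y : V) :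
    B (poleForm N Δ t x) y = -B x (poleForm N Δ t y) := by
  simp only [poleForm, add_apply, smul_apply, map_add,
    map_smul, smul_eq_mul, hN, hΔ]
  ring

variable [CompleteSpace V]

lemma IsNormalizedPrimitive.bilin_apply_apply {s : Set ℝ} [s.OrdConnected] {Ω : ℝ → V →L[ℝ] V}
    {G : ℝ → ℝ → V →L[ℝ] V} (hG : IsNormalizedPrimitive s Ω G) (hs : IsOpen s)
    (hΩ : ∀ t ∈ s, ∀ x y, B (Ω t x) y = -B x (Ω t y)) {p t : ℝ} (hp : p ∈ s) (ht : t ∈ s)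
    (x y : V) : B (G p t x) (G p t y) = B x y := by
  have hderiv : ∀ q ∈ s, HasDerivAt (fun q => B (G q t x) (G q t y)) 0 q := fun q hq => by
    have hleft : ∀ z, HasDerivAt (fun q => G q t z) (-Ω q (G q t z)) q := fun z => by
      simpa using (hG.hasDerivAt_left hs hq ht).clm_apply (hasDerivAt_const q z)
    refine (((B.hasFDerivAt.comp_hasDerivAt q (hleft x)).clm_apply (hleft y))).congr_deriv ?_
    simp [hΩ q hq]
  have hconst := hs.is_const_of_deriv_eq_zero (Set.OrdConnected.isPreconnected ‹_›)
    (fun q hq => (hderiv q hq).differentiableAt.differentiableWithinAt)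
    (fun q hq => (hderiv q hq).deriv) hp ht
  simpa [hG.apply_self t ht] using hconst

end BilinearForm

section FrobeniusSection

variable {V : Type*} [NormedAddCommGroup V] [NormedSpace ℝ V] {N : V →L[ℝ] V}
  {Δ : ℝ → V →L[ℝ] V} {b : ℝ} {G : ℝ → ℝ → V →L[ℝ] V} {v : V}

/-- The parallel section `y` (that is, `G p t (y t) = y p`) with `y(t) → v` as `t → 0`, for `v` in
the kernel of `N`, extended to the singularity by `y(0) = v`. -/
def frobeniusSection (N : V →L[ℝ] V) (G : ℝ → ℝ → V →L[ℝ] V) (v : V) : ℝ → V :=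
  Function.update (fun p => frobeniusFactor N (G p) v) 0 v

lemma frobeniusSection_zero : frobeniusSection N G v 0 = v := Function.update_self ..

lemma frobeniusSection_of_ne_zero {p : ℝ} (hp : p ≠ 0) :
    frobeniusSection N G v p = frobeniusFactor N (G p) v := Function.update_of_ne hp ..

lemma eulerPow_apply_of_apply_eq_zero (hN : IsNilpotent N) (hv : N v = 0) (t : ℝ) :
    eulerPow N t v = v := by
  obtain ⟨k, hk⟩ := hN
  have hpow : ∀ i : ℕ, (N ^ (i + 1)) v = 0 := fun i => by
    rw [pow_succ, mul_apply_eq_comp, hv, map_zero]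
  rw [eulerPow, exp_smul_eq_sum_of_pow_eq_zero (pow_eq_zero_of_le k.le_succ hk),
    Finset.sum_range_succ']
  simp [hpow]

namespace IsNormalizedPrimitive

variable [CompleteSpace V] (hG : IsNormalizedPrimitive (Ioo 0 b) (poleForm N Δ) G)
  (hN : IsNilpotent N) (hΔ : Δ =O[𝓝[>] 0] fun _ => (1 : ℝ))
include hG hN hΔ

lemma apply_frobeniusSection {p t : ℝ} (hp : p ∈ Ioo 0 b) (ht : t ∈ Ioo 0 b) :
    G p t (frobeniusSection N G v t) = frobeniusSection N G v p := by
  rw [frobeniusSection_of_ne_zero ht.1.ne', frobeniusSection_of_ne_zero hp.1.ne',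
    ← mul_apply_eq_comp, hG.mul_frobeniusFactor hN hΔ hp ht]

lemma continuousOn_frobeniusSection (hb : 0 < b) (hv : N v = 0) :
    ContinuousOn (frobeniusSection N G v) (Ico 0 b) := by
  refine continuousOn_update_iff.mpr ⟨?_, fun _ => ?_⟩ <;> rw [Ico_sdiff_left]
  · exact HasDerivAt.continuousOn fun p hp =>
      (hG.hasDerivAt_frobeniusFactor hN hΔ hp).clm_apply (hasDerivAt_const p v)
  · rw [nhdsWithin_Ioo_eq_nhdsGT hb, ← tendsto_sub_nhds_zero_iff]
    have hlim := ((ContinuousLinearMap.apply ℝ V v).continuous.tendsto 0).comp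
      (hG.tendsto_frobeniusFactor_sub_eulerPow hN hΔ hb)
    simpa [Function.comp_def, eulerPow_apply_of_apply_eq_zero hN hv] using hlim

lemma frobeniusSection_ne_zero (hv : v ≠ 0) {p : ℝ} (hp : p ∈ Ico 0 b) :
    frobeniusSection N G v p ≠ 0 := by
  rcases hp.1.eq_or_lt with rfl | hp₀
  · rwa [frobeniusSection_zero]
  · obtain ⟨u, hu, -⟩ := hG.exists_unit_eq_frobeniusFactor hN hΔ ⟨hp₀, hp.2⟩
    rw [frobeniusSection_of_ne_zero hp₀.ne', ← hu]
    intro hzero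
    apply hv
    rw [← one_apply_eq_self v (F := V →L[ℝ] V), ← u.inv_mul, mul_apply_eq_comp,
      hzero, map_zero]

lemma bilin_frobeniusSection {B : V →L[ℝ] V →L[ℝ] ℝ} (hb : 0 < b) (hv : N v = 0)
    (hΩ : ∀ t ∈ Ioo 0 b, ∀ x y, B (poleForm N Δ t x) y = -B x (poleForm N Δ t y))
    {p : ℝ} (hp : p ∈ Ico 0 b) :
    B (frobeniusSection N G v p) (frobeniusSection N G v p) = B v v := by
  rcases hp.1.eq_or_lt with rfl | hp₀
  · rw [frobeniusSection_zero]
  have hlim : Tendsto (frobeniusSection N G v) (𝓝[>] 0) (𝓝 v) := by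
    have := (hG.continuousOn_frobeniusSection hN hΔ hb hv) 0 (left_mem_Ico.mpr hb)
    rw [ContinuousWithinAt, frobeniusSection_zero] at this
    exact this.mono_left (nhdsWithin_Ioo_eq_nhdsGT hb ▸ nhdsWithin_mono 0 Ioo_subset_Ico_self)
  have hdiag : Continuous fun x => B x x := by fun_prop
  refine tendsto_nhds_unique_of_eventuallyEq tendsto_const_nhds
    ((hdiag.tendsto v).comp hlim) ?_
  filter_upwards [Ioo_mem_nhdsGT hb] with t ht
  rw [← hG.apply_frobeniusSection hN hΔ ⟨hp₀, hp.2⟩ ht]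
  exact hG.bilin_apply_apply isOpen_Ioo hΩ ⟨hp₀, hp.2⟩ ht _ _

end IsNormalizedPrimitive

end FrobeniusSection

theorem stmt8_general {V : Type*} [NormedAddCommGroup V] [NormedSpace ℝ V] [CompleteSpace V]
    {B : V →L[ℝ] V →L[ℝ] ℝ} (hB : ∀ x y, B x y = B y x) {b : ℝ} (hb : 0 < b) {v w : V}
    (hv : B v v = 0) (hv₀ : v ≠ 0) (hvw : B v w = 0) (hw : B w w ≠ 0) {Δ : ℝ → V →L[ℝ] V}
    (hΔ_bdd : ∃ D, ∀ t ∈ Ioo 0 b, ‖Δ t‖ ≤ D)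
    (hΔ_skew : ∀ t ∈ Ioo 0 b, ∀ x y, B (Δ t x) y = -B x (Δ t y)) {G : ℝ → ℝ → V →L[ℝ] V}
    (hG : ∀ p ∈ Ioo 0 b, ∀ t ∈ Ioo 0 b,
      HasDerivAt (G p) (G p t * poleForm (bilinWedge B v w) Δ t) t)
    (hGp : ∀ p ∈ Ioo 0 b, G p p = 1) :
    ∃ k : ℝ → V, ContinuousOn k (Ico 0 b) ∧
      (∀ t ∈ Ico 0 b, B (k t) (k t) = 0 ∧ k t ≠ 0) ∧
      k 0 = (-(B w w / 2)) • v ∧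
      ∀ p ∈ Ioo 0 b,
        Tendsto (fun t : ℝ => (1 + Real.log (t / p) ^ 2)⁻¹ • G p t)
          (𝓝[>] 0) (𝓝 ((B v).smulRight (k p))) ∧
        ∀ t ∈ Ioo 0 b, G p t (k t) = k p := by
  set N := bilinWedge B v w
  set c := -(B w w / 2)
  obtain ⟨D, hD⟩ := hΔ_bdd
  have hΔ : Δ =O[𝓝[>] 0] fun _ => (1 : ℝ) := .of_bound D <| by
    filter_upwards [Ioo_mem_nhdsGT hb] with t ht using by simpa using hD t ht
  have hΔ_image : Bornology.IsBounded (Δ '' Ioo 0 b) :=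
    isBounded_iff_forall_norm_le.mpr ⟨D, forall_mem_image.mpr hD⟩
  have hprim : IsNormalizedPrimitive (Ioo 0 b) (poleForm N Δ) G :=
    ⟨fun _ hc _ hd => isBounded_image_poleForm hΔ_image hc hd, hG, hGp⟩
  have hN : N ^ 3 = 0 := bilinWedge_pow_three hB hv hvw
  have hNil : IsNilpotent N := ⟨3, hN⟩
  have hNv : N (c • v) = 0 := by rw [map_smul, bilinWedge_apply_left hB hv hvw, smul_zero]
  have hcv : c • v ≠ 0 := smul_ne_zero (neg_ne_zero.mpr (div_ne_zero hw two_ne_zero)) hv₀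
  refine ⟨frobeniusSection N G (c • v), hprim.continuousOn_frobeniusSection hNil hΔ hb hNv,
    fun t ht => ⟨?_, hprim.frobeniusSection_ne_zero hNil hΔ hcv ht⟩, frobeniusSection_zero,
    fun p hp => ⟨?_, fun t ht => hprim.apply_frobeniusSection hNil hΔ hp ht⟩⟩
  · rw [hprim.bilin_frobeniusSection hNil hΔ hb hNv (fun t ht => poleForm_skew
      (bilinWedge_skew hB v w) (hΔ_skew t ht)) ht]
    simp [hv]
  · have hlim := hprim.tendsto_inv_one_add_log_sq_smul hN hΔ hp
    rw [mul_half_bilinWedge_sq hB hv hvw] at hlim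
    rwa [frobeniusSection_of_ne_zero hp.1.ne']

/-- The Minkowski inner product as a continuous bilinear form. -/
def minkForm : E n →L[ℝ] E n →L[ℝ] ℝ :=
  (LinearMap.mk₂ ℝ mink mink_add_left mink_smul_left mink_add_right
    fun c x y => mink_smul_right x c y).toContinuousBilinearMap

lemma smulRight_minkForm (v w : E n) : (minkForm w).smulRight v = rankOne v w := by
  ext1 x
  exact congrArg (· • v) (mink_comm w x)

/-- Corollary 3.4: limiting behaviour of primitives of degenerate pole forms. -/
theorem stmt8 {n : ℕ} (b : ℝ) (hb : 0 < b)
    (v0 w : E n) (h0 : mink v0 v0 = 0) (hv0 : v0 ≠ 0)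
    (horth : mink v0 w = 0) (hw : 0 < mink w w)
    (Δ : ℝ → E n →L[ℝ] E n)
    (hΔc : ContinuousOn Δ (Set.Ioo 0 b))
    (hΔb : ∃ D : ℝ, ∀ t ∈ Set.Ioo (0:ℝ) b, ‖Δ t‖ ≤ D)
    (hΔskew : ∀ t ∈ Set.Ioo (0:ℝ) b, ∀ x y : E n, mink (Δ t x) y = - mink x (Δ t y))
    (G : ℝ → ℝ → E n →L[ℝ] E n)
    (hG : ∀ p ∈ Set.Ioo (0:ℝ) b, ∀ t ∈ Set.Ioo (0:ℝ) b,
      HasDerivAt (G p) (G p t * ((-t⁻¹) • wedge v0 w + Δ t)) t)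
    (hGp : ∀ p ∈ Set.Ioo (0:ℝ) b, G p p = 1) :
    ∃ k : ℝ → E n, ContinuousOn k (Set.Ico 0 b) ∧
      (∀ t ∈ Set.Ico (0:ℝ) b, mink (k t) (k t) = 0 ∧ k t ≠ 0) ∧
      k 0 = (-(mink w w / 2)) • v0 ∧
      ∀ p ∈ Set.Ioo (0:ℝ) b,
        Tendsto (fun t : ℝ => (1 + (Real.log (t / p)) ^ 2)⁻¹ • G p t)
          (𝓝[>] 0) (𝓝 (rankOne (k p) v0)) ∧
        ∀ t ∈ Set.Ioo (0:ℝ) b, G p t (k t) = k p := by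
  simp only [← smulRight_minkForm]
  exact stmt8_general (B := minkForm) mink_comm hb h0 hv0 horth hw.ne' hΔb hΔskew hG hGp
end
end

section
/- Let b > 0, let v₊, v₋ ∈ ℝ^{n+2} be null with ζ := ⟨v₊,v₋⟩ > 0, and let Δ:(0,b) → End(ℝ^{n+2}) be continuous and bounded with each Δ(t) skew-adjoint with respect to the Minkowski form. Define Ψ(t) := −(1/t)·(v₋∧v₊) + Δ(t), and for each p ∈ (0,b) let G_p:(0,b) → End(ℝ^{n+2}) be differentiable with G_p′(t) = G_p(t)∘Ψ(t) and G_p(p) = id. Then there exist a constant C > 0 and b̃ ∈ (0,b] such that for all p ∈ (0,b̃) and all t ∈ (0,p]: (t/p)^ζ·‖G_p(t)‖ ≤ C and (t/p)^ζ·‖G_p(t)^{−1}‖ ≤ C. -/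
open scoped BigOperators Topology
open Filter Set MeasureTheory

noncomputable section

variable {n : ℕ}

/-!
Put `A = v₋ ∧ v₊` and `ζ = ⟨v₊, v₋⟩`. Multiplying a solution of `G' = G (-s⁻¹ A + Δ)` by
`(s / t) ^ A = exp (log (s / t) A)` removes the singular term, and `‖(s / t) ^ A‖ ≤ κ (s / t) ^ ζ`
because `A` is diagonalizable with eigenvalues `ζ`, `-ζ` and `0`. Integrating from `t` to `p` bounds
`(t / p) ^ ζ ‖G t‖` by a constant plus a multiple of the integral of `(s / p) ^ ζ ‖G s‖`, and
Grönwall's inequality concludes. The inverse satisfies the same bound: if `J` is the Gram matrix of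
the Minkowski form, then `G J G⋆` is conserved, so `G⁻¹ = J G⋆ J` has the same norm as `G`.
-/

section Gronwall

lemma le_mul_exp_of_le_add_mul_integral {u : ℝ → ℝ} {K L t p : ℝ} (htp : t ≤ p) (hL : 0 ≤ L)
    (hu : ContinuousOn u (Icc t p)) (hle : ∀ s ∈ Icc t p, u s ≤ K + L * ∫ r in s..p, u r) :
    u t ≤ K * Real.exp (L * (p - t)) := by
  have hderiv : ∀ s ∈ Ioo t p, HasDerivAt (fun s ↦ ∫ r in s..p, u r) (-u s) s := fun s hs ↦
    intervalIntegral.integral_hasDerivAt_left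
      ((hu.mono (Icc_subset_Icc_left hs.1.le)).intervalIntegrable_of_Icc hs.2.le)
      (hu.mono Ioo_subset_Icc_self |>.stronglyMeasurableAtFilter isOpen_Ioo s hs)
      (hu.continuousAt (Icc_mem_nhds hs.1 hs.2))
  have hmono : MonotoneOn (fun s ↦ (K + L * ∫ r in s..p, u r) * Real.exp (L * s)) (Icc t p) := by
    refine monotoneOn_of_hasDerivWithinAt_nonneg (convex_Icc t p)
      (f' := fun s ↦ (L * -u s) * Real.exp (L * s) +
        (K + L * ∫ r in s..p, u r) * (Real.exp (L * s) * (L * 1))) ?_ ?_ ?_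
    · have hint : ContinuousOn (fun s ↦ ∫ r in s..p, u r) (Icc t p) := by
        rw [← uIcc_of_le htp] at hu ⊢
        exact intervalIntegral.continuousOn_primitive_interval_left
          (hu.integrableOn_compact isCompact_uIcc)
      fun_prop
    · intro s hs
      rw [interior_Icc] at hs
      exact ((((hderiv s hs).const_mul L).const_add K).mul
        ((hasDerivAt_id s).const_mul L).exp).hasDerivWithinAt
    · intro s hs
      have hgap := sub_nonneg.2 (hle s (interior_subset hs))
      calc (0 : ℝ) ≤ L * Real.exp (L * s) * (K + L * (∫ r in s..p, u r) - u s) := by positivity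
        _ = _ := by ring
  calc u t ≤ K + L * ∫ r in t..p, u r := hle t (left_mem_Icc.2 htp)
    _ = (K + L * ∫ r in t..p, u r) * Real.exp (L * t) * Real.exp (-(L * t)) := by
        rw [mul_assoc, ← Real.exp_add, add_neg_cancel, Real.exp_zero, mul_one]
    _ ≤ K * Real.exp (L * p) * Real.exp (-(L * t)) := by
        have := hmono (left_mem_Icc.2 htp) (right_mem_Icc.2 htp) htp
        simp only [intervalIntegral.integral_same, mul_zero, add_zero] at this
        gcongr
    _ = K * Real.exp (L * (p - t)) := by rw [mul_assoc, ← Real.exp_add]; ring_nf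

end Gronwall

section FirstOrderPole

variable {𝔸 : Type*} [NormedRing 𝔸] [NormedAlgebra ℝ 𝔸] [CompleteSpace 𝔸]

lemma exp_mul_of_mul_eq_smul {A P : 𝔸} {c : ℝ} (h : A * P = c • P) :
    NormedSpace.exp A * P = Real.exp c • P := by
  have hpow (k : ℕ) : A ^ k * P = c ^ k • P := by
    induction k with
    | zero => simp
    | succ k ih => rw [pow_succ, mul_assoc, h, mul_smul_comm, ih, smul_smul, pow_succ']
  have hA := (NormedSpace.exp_series_hasSum_exp' (𝕂 := ℝ) A).mul_right P
  have hc := (NormedSpace.exp_series_hasSum_exp' (𝕂 := ℝ) c).smul_const P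
  simp only [smul_mul_assoc, hpow] at hA
  simp only [smul_eq_mul, mul_smul, ← Real.exp_eq_exp_ℝ] at hc
  exact hA.unique hc

lemma norm_exp_log_smul_le_of_eigenprojections {ι : Type*} [Fintype ι] {A : 𝔸} {P : ι → 𝔸}
    {a : ι → ℝ} {ζ x : ℝ} (hP : ∑ i, P i = 1) (hA : ∀ i, A * P i = a i • P i)
    (ha : ∀ i, a i ≤ ζ) (hx : 1 ≤ x) :
    ‖NormedSpace.exp (Real.log x • A)‖ ≤ (∑ i, ‖P i‖) * x ^ ζ := by
  have hexp (i : ι) : NormedSpace.exp (Real.log x • A) * P i = x ^ a i • P i := by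
    rw [exp_mul_of_mul_eq_smul (by rw [smul_mul_assoc, hA, smul_smul]),
      Real.rpow_def_of_pos (one_pos.trans_le hx)]
  calc ‖NormedSpace.exp (Real.log x • A)‖ = ‖∑ i, x ^ a i • P i‖ := by
        simp_rw [← hexp, ← Finset.mul_sum, hP, mul_one]
    _ ≤ ∑ i, ‖P i‖ * x ^ ζ := by
        refine norm_sum_le_of_le _ fun i _ ↦ ?_
        rw [norm_smul, Real.norm_of_nonneg (by positivity), mul_comm]
        gcongr
        exact ha i
    _ = (∑ i, ‖P i‖) * x ^ ζ := (Finset.sum_mul ..).symm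

-- Variation of constants: the factor `(r / t) ^ A` cancels the singular part of the equation.
lemma hasDerivAt_mul_exp_log_smul {G : ℝ → 𝔸} {A B : 𝔸} {s t : ℝ} (hs : s ≠ 0) (ht : t ≠ 0)
    (hG : HasDerivAt G (G s * ((-s⁻¹) • A + B)) s) :
    HasDerivAt (fun r ↦ G r * NormedSpace.exp (Real.log (r / t) • A))
      (G s * B * NormedSpace.exp (Real.log (s / t) • A)) s := by
  have hlog : HasDerivAt (fun r ↦ Real.log (r / t)) s⁻¹ s := by
    refine (((hasDerivAt_id s).div_const t).log (div_ne_zero hs ht)).congr_deriv ?_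
    simp only [id]
    field_simp
  refine (hG.mul ((hasDerivAt_exp_smul_const' A (Real.log (s / t))).scomp s hlog)).congr_deriv ?_
  simp only [Function.comp_apply, mul_add, add_mul, mul_smul_comm, smul_mul_assoc, neg_smul,
    mul_neg, neg_mul, mul_assoc]
  abel

lemma norm_mul_exp_log_smul_sub_le_integral {G Δ : ℝ → 𝔸} {A : 𝔸} {κ ζ D t p : ℝ}
    (hA : ∀ x : ℝ, 1 ≤ x → ‖NormedSpace.exp (Real.log x • A)‖ ≤ κ * x ^ ζ) (ht : 0 < t)
    (htp : t ≤ p) (hΔ : ∀ s ∈ Icc t p, ‖Δ s‖ ≤ D)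
    (hG : ∀ s ∈ Icc t p, HasDerivAt G (G s * ((-s⁻¹) • A + Δ s)) s) :
    ‖G p * NormedSpace.exp (Real.log (p / t) • A) - G t‖ ≤
      ∫ s in t..p, κ * D * ((s / t) ^ ζ * ‖G s‖) := by
  have hpos : ∀ s ∈ Icc t p, 0 < s := fun s hs ↦ ht.trans_le hs.1
  have hderiv := fun s hs ↦ hasDerivAt_mul_exp_log_smul (hpos s hs).ne' ht.ne' (hG s hs)
  have hbound : ∀ s ∈ Icc t p, ‖G s * Δ s * NormedSpace.exp (Real.log (s / t) • A)‖ ≤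
      κ * D * ((s / t) ^ ζ * ‖G s‖) := by
    intro s hs
    have hD : 0 ≤ D := (norm_nonneg _).trans (hΔ s hs)
    calc _ ≤ ‖G s‖ * ‖Δ s‖ * ‖NormedSpace.exp (Real.log (s / t) • A)‖ := norm_mul₃_le
      _ ≤ ‖G s‖ * D * (κ * (s / t) ^ ζ) := by
          gcongr
          exacts [hΔ s hs, hA _ ((one_le_div ht).2 hs.1)]
      _ = κ * D * ((s / t) ^ ζ * ‖G s‖) := by ring
  have hint : ContinuousOn (fun s ↦ κ * D * ((s / t) ^ ζ * ‖G s‖)) (Icc t p) :=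
    continuousOn_const.mul <| .mul
      ((continuousOn_id.div_const t).rpow_const fun s hs ↦ .inl (div_pos (hpos s hs) ht).ne')
      fun s hs ↦ (hG s hs).continuousAt.norm.continuousWithinAt
  simpa only [div_self ht.ne', Real.log_one, zero_smul, NormedSpace.exp_zero, mul_one] using
    norm_sub_le_integral_of_norm_deriv_le_of_le htp
      (fun s hs ↦ (hderiv s hs).continuousAt.continuousWithinAt)
      (fun s hs ↦ (hderiv s (Ioo_subset_Icc_self hs)).differentiableAt.differentiableWithinAt)
      (.of_forall fun s hs ↦ by
        rw [(hderiv s (Ioo_subset_Icc_self hs)).deriv]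
        exact hbound s (Ioo_subset_Icc_self hs))
      (hint.intervalIntegrable_of_Icc htp)

lemma rpow_mul_norm_le_add_integral {G Δ : ℝ → 𝔸} {A : 𝔸} {κ ζ D t p : ℝ}
    (hA : ∀ x : ℝ, 1 ≤ x → ‖NormedSpace.exp (Real.log x • A)‖ ≤ κ * x ^ ζ) (ht : 0 < t)
    (htp : t ≤ p) (hΔ : ∀ s ∈ Icc t p, ‖Δ s‖ ≤ D)
    (hG : ∀ s ∈ Icc t p, HasDerivAt G (G s * ((-s⁻¹) • A + Δ s)) s) :
    (t / p) ^ ζ * ‖G t‖ ≤ κ * ‖G p‖ + κ * D * ∫ s in t..p, (s / p) ^ ζ * ‖G s‖ := by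
  have hp : 0 < p := ht.trans_le htp
  have hrescale : ∀ s ∈ Icc t p, (t / p) ^ ζ * (s / t) ^ ζ = (s / p) ^ ζ := by
    intro s hs
    rw [← Real.mul_rpow (by positivity) (div_pos (ht.trans_le hs.1) ht).le]
    congr 1
    field_simp
  calc (t / p) ^ ζ * ‖G t‖
      ≤ (t / p) ^ ζ * (‖G p‖ * (κ * (p / t) ^ ζ) +
          ∫ s in t..p, κ * D * ((s / t) ^ ζ * ‖G s‖)) := by
        gcongr
        refine (norm_le_norm_add_norm_sub _ _).trans
          (add_le_add ?_ (norm_mul_exp_log_smul_sub_le_integral hA ht htp hΔ hG))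
        exact (norm_mul_le _ _).trans (by gcongr; exact hA _ ((one_le_div ht).2 htp))
    _ = κ * ‖G p‖ * ((t / p) ^ ζ * (p / t) ^ ζ) +
          κ * D * ∫ s in t..p, (t / p) ^ ζ * (s / t) ^ ζ * ‖G s‖ := by
        simp only [intervalIntegral.integral_const_mul, mul_assoc]
        ring
    _ = κ * ‖G p‖ + κ * D * ∫ s in t..p, (s / p) ^ ζ * ‖G s‖ := by
        rw [hrescale p (right_mem_Icc.2 htp), div_self hp.ne', Real.one_rpow, mul_one]
        congr 2
        refine intervalIntegral.integral_congr fun s hs ↦ ?_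
        rw [uIcc_of_le htp] at hs
        simp only [hrescale s hs]

theorem rpow_mul_norm_le_mul_exp {G Δ : ℝ → 𝔸} {A : 𝔸} {κ ζ D t p : ℝ}
    (hA : ∀ x : ℝ, 1 ≤ x → ‖NormedSpace.exp (Real.log x • A)‖ ≤ κ * x ^ ζ) (ht : 0 < t)
    (htp : t ≤ p) (hΔ : ∀ s ∈ Icc t p, ‖Δ s‖ ≤ D)
    (hG : ∀ s ∈ Icc t p, HasDerivAt G (G s * ((-s⁻¹) • A + Δ s)) s) :
    (t / p) ^ ζ * ‖G t‖ ≤ κ * ‖G p‖ * Real.exp (κ * D * (p - t)) := by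
  have hκ : 0 ≤ κ := by simpa using (norm_nonneg _).trans (hA 1 le_rfl)
  have hD : 0 ≤ D := (norm_nonneg _).trans (hΔ t (left_mem_Icc.2 htp))
  refine le_mul_exp_of_le_add_mul_integral (u := fun s ↦ (s / p) ^ ζ * ‖G s‖) htp
    (mul_nonneg hκ hD) (.mul ?_ fun s hs ↦ (hG s hs).continuousAt.norm.continuousWithinAt)
    fun s hs ↦ ?_
  · exact (continuousOn_id.div_const p).rpow_const fun s hs ↦
      .inl (div_pos (ht.trans_le hs.1) (ht.trans_le htp)).ne'
  · have hsub : Icc s p ⊆ Icc t p := Icc_subset_Icc_left hs.1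
    exact rpow_mul_norm_le_add_integral hA (ht.trans_le hs.1) hs.2
      (fun r hr ↦ hΔ r (hsub hr)) fun r hr ↦ hG r (hsub hr)

end FirstOrderPole

section LeftInverse

variable {𝔸 : Type*} [NormedRing 𝔸]

lemma eq_zero_of_isIdempotentElem_of_norm_lt_one {e : 𝔸} (he : IsIdempotentElem e)
    (hlt : ‖e‖ < 1) : e = 0 := by
  by_contra hne
  have hmul : ‖e‖ ≤ ‖e‖ * ‖e‖ := by simpa only [he.eq] using norm_mul_le e e
  nlinarith [norm_pos_iff.2 hne]

-- `1 - g x * f x` is a continuous family of idempotents, and no idempotent has norm in `(0, 1)`.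
lemma mul_eq_one_of_isPreconnected {X : Type*} [TopologicalSpace X] {s : Set X}
    (hs : IsPreconnected s) {f g : X → 𝔸} (hf : ContinuousOn f s) (hg : ContinuousOn g s)
    (hfg : ∀ x ∈ s, f x * g x = 1) {p : X} (hp : p ∈ s) (hgf : g p * f p = 1) {x : X}
    (hx : x ∈ s) : g x * f x = 1 := by
  have hidem : ∀ y ∈ s, IsIdempotentElem (1 - g y * f y) := fun y hy ↦ by
    refine IsIdempotentElem.one_sub ?_
    rw [IsIdempotentElem, mul_assoc, ← mul_assoc (f y), hfg y hy, one_mul]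
  by_contra hne
  have hlarge : 1 ≤ ‖1 - g x * f x‖ := by
    by_contra! hlt
    exact hne (sub_eq_zero.1 (eq_zero_of_isIdempotentElem_of_norm_lt_one (hidem x hx) hlt)).symm
  obtain ⟨y, hy, hhalf⟩ : (1 / 2 : ℝ) ∈ (fun y ↦ ‖1 - g y * f y‖) '' s :=
    hs.intermediate_value hp hx (continuousOn_const.sub (hg.mul hf)).norm
      ⟨by simp [hgf], one_half_lt_one.le.trans hlarge⟩
  have hzero := eq_zero_of_isIdempotentElem_of_norm_lt_one (hidem y hy) (by linarith)
  norm_num [hzero] at hhalf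

end LeftInverse

section FundamentalSymmetry

/-- A fundamental symmetry in a star ring: a self-adjoint involution. On a Hilbert space it encodes
the indefinite inner product `⟪x, J y⟫` of a Krein space. -/
structure IsFundamentalSymmetry {R : Type*} [Monoid R] [StarMul R] (J : R) : Prop where
  isSelfAdjoint : IsSelfAdjoint J
  mul_self : J * J = 1

lemma IsFundamentalSymmetry.mem_unitary {R : Type*} [Monoid R] [StarMul R] {J : R}
    (hJ : IsFundamentalSymmetry J) : J ∈ unitary R :=
  Unitary.mem_iff.2 ⟨by rw [hJ.isSelfAdjoint.star_eq, hJ.mul_self],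
    by rw [hJ.isSelfAdjoint.star_eq, hJ.mul_self]⟩

/-- Skew-adjointness of `T` with respect to a fundamental symmetry `J`. The adjoint of `T` for the
indefinite form is `J * star T * J`; setting its sum with `T` to zero and multiplying by `J` on the
right gives this condition. -/
def IsKreinSkewAdjoint {R : Type*} [NonUnitalNonAssocSemiring R] [Star R] (J T : R) : Prop :=
  T * J + J * star T = 0

namespace IsKreinSkewAdjoint

lemma add {R : Type*} [NonUnitalNonAssocSemiring R] [StarAddMonoid R] {J S T : R}
    (hS : IsKreinSkewAdjoint J S) (hT : IsKreinSkewAdjoint J T) :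
    IsKreinSkewAdjoint J (S + T) := by
  rw [IsKreinSkewAdjoint, star_add, add_mul, mul_add, add_add_add_comm, hS, hT, add_zero]

lemma smul {R : Type*} [NonUnitalNonAssocSemiring R] [StarRing R] [Module ℝ R]
    [IsScalarTower ℝ R R] [SMulCommClass ℝ R R] [StarModule ℝ R] {J T : R} (c : ℝ)
    (hT : IsKreinSkewAdjoint J T) : IsKreinSkewAdjoint J (c • T) := by
  rw [IsKreinSkewAdjoint, star_smul, star_trivial, smul_mul_assoc, mul_smul_comm, ← smul_add, hT,
    smul_zero]

end IsKreinSkewAdjoint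

variable {𝔸 : Type*} [NormedRing 𝔸] [StarRing 𝔸] [CStarRing 𝔸] [NormedAlgebra ℝ 𝔸]
  [StarModule ℝ 𝔸]

lemma mul_mul_star_eq_of_hasDerivAt {J : 𝔸} {Ψ G : ℝ → 𝔸} {s : Set ℝ} (hs : IsOpen s)
    (hsc : IsPreconnected s) (hΨ : ∀ r ∈ s, IsKreinSkewAdjoint J (Ψ r))
    (hG : ∀ r ∈ s, HasDerivAt G (G r * Ψ r) r) {p t : ℝ} (hp : p ∈ s) (hGp : G p = 1)
    (ht : t ∈ s) : G t * J * star (G t) = J := by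
  have hderiv : ∀ r ∈ s, HasDerivAt (fun r ↦ G r * J * star (G r)) 0 r := by
    intro r hr
    refine (((hG r hr).mul_const J).mul (hG r hr).star).congr_deriv ?_
    calc G r * Ψ r * J * star (G r) + G r * J * star (G r * Ψ r)
        = G r * (Ψ r * J + J * star (Ψ r)) * star (G r) := by rw [star_mul]; noncomm_ring
      _ = 0 := by rw [hΨ r hr, mul_zero, zero_mul]
  simpa [hGp] using hs.is_const_of_deriv_eq_zero hsc
    (fun r hr ↦ (hderiv r hr).differentiableAt.differentiableWithinAt)
    (fun r hr ↦ (hderiv r hr).deriv) ht hp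

lemma norm_ringInverse_eq_of_hasDerivAt {J : 𝔸} (hJ : IsFundamentalSymmetry J) {Ψ G : ℝ → 𝔸}
    {s : Set ℝ} (hs : IsOpen s) (hsc : IsPreconnected s)
    (hΨ : ∀ r ∈ s, IsKreinSkewAdjoint J (Ψ r))
    (hG : ∀ r ∈ s, HasDerivAt G (G r * Ψ r) r) {p t : ℝ} (hp : p ∈ s) (hGp : G p = 1)
    (ht : t ∈ s) : ‖Ring.inverse (G t)‖ = ‖G t‖ := by
  have hcont : ContinuousOn G s := fun r hr ↦ (hG r hr).continuousAt.continuousWithinAt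
  have hright : ∀ r ∈ s, G r * (J * star (G r) * J) = 1 := fun r hr ↦ by
    rw [← mul_assoc, ← mul_assoc, mul_mul_star_eq_of_hasDerivAt hs hsc hΨ hG hp hGp hr,
      hJ.mul_self]
  have hleft : J * star (G t) * J * G t = 1 :=
    mul_eq_one_of_isPreconnected (g := fun r ↦ J * star (G r) * J) hsc hcont (by fun_prop) hright
      hp (by simp [hGp, hJ.mul_self]) ht
  have hinv : Ring.inverse (G t) = J * star (G t) * J :=
    Ring.inverse_unit ⟨G t, _, hright t ht, hleft⟩
  rw [hinv, CStarRing.norm_mul_mem_unitary _ hJ.mem_unitary,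
    CStarRing.norm_mem_unitary_mul _ hJ.mem_unitary, norm_star]

end FundamentalSymmetry

section KreinSpace

variable {H : Type*} [NormedAddCommGroup H] [InnerProductSpace ℝ H]

/-- The endomorphism `v ∧ w : x ↦ [v, x] w - [w, x] v` attached to the indefinite form
`[x, y] = ⟪x, J y⟫`, with `J` self-adjoint. -/
def kreinWedge (J : H →L[ℝ] H) (v w : H) : H →L[ℝ] H :=
  InnerProductSpace.rankOne ℝ w (J v) - InnerProductSpace.rankOne ℝ v (J w)

-- For null `v` and `w`, the endomorphism `w ∧ v` has eigenvectors `v` and `w`, and it vanishes on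
-- the complement of their span that is orthogonal for the indefinite form.
lemma exists_eigenprojections_kreinWedge {J : H →L[ℝ] H} {v w : H} {ζ : ℝ}
    (hv : inner ℝ v (J v) = 0) (hw : inner ℝ w (J w) = 0) (hvw : inner ℝ v (J w) = ζ)
    (hwv : inner ℝ w (J v) = ζ) (hζ : ζ ≠ 0) :
    ∃ P : Fin 3 → H →L[ℝ] H, ∑ i, P i = 1 ∧
      ∀ i, kreinWedge J w v * P i = (![ζ, -ζ, 0] : Fin 3 → ℝ) i • P i := by
  set A := kreinWedge J w v
  set Pv := ζ⁻¹ • InnerProductSpace.rankOne ℝ v (J w)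
  set Pw := ζ⁻¹ • InnerProductSpace.rankOne ℝ w (J v)
  rw [real_inner_comm] at hv hw hvw hwv
  have hAv : A v = ζ • v := by simp [A, kreinWedge, hv, hvw]
  have hAw : A w = -(ζ • w) := by simp [A, kreinWedge, hw, hwv]
  have hPv : A * Pv = ζ • Pv := by
    simp only [Pv, ContinuousLinearMap.mul_def, ContinuousLinearMap.comp_smul,
      InnerProductSpace.comp_rankOne, hAv, map_smul, _root_.smul_apply,
      smul_comm ζ⁻¹ ζ]
  have hPw : A * Pw = -ζ • Pw := by
    simp only [Pw, ContinuousLinearMap.mul_def, ContinuousLinearMap.comp_smul,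
      InnerProductSpace.comp_rankOne, hAw, map_neg, map_smul, _root_.neg_apply,
      _root_.smul_apply, smul_neg, neg_smul, smul_comm ζ⁻¹ ζ]
  have hA : A = ζ • Pv - ζ • Pw := by
    simp only [A, Pv, Pw, kreinWedge, smul_inv_smul₀ hζ]
  have hker : A * (1 - Pv - Pw) = 0 := by
    rw [mul_sub, mul_sub, mul_one, hPv, hPw, hA]
    module
  refine ⟨![Pv, Pw, 1 - Pv - Pw], ?_, ?_⟩
  · simp [Fin.sum_univ_three]
  · simp [Fin.forall_fin_succ, hPv, hPw, hker]

variable [CompleteSpace H]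

lemma isKreinSkewAdjoint_kreinWedge {J : H →L[ℝ] H} (hJ : IsFundamentalSymmetry J) (v w : H) :
    IsKreinSkewAdjoint J (kreinWedge J v w) := by
  have hadj : ContinuousLinearMap.adjoint J = J := hJ.isSelfAdjoint
  have hinvol (x : H) : J (J x) = x := DFunLike.congr_fun hJ.mul_self x
  simp [IsKreinSkewAdjoint, kreinWedge, sub_mul, mul_sub, ContinuousLinearMap.star_eq_adjoint,
    ContinuousLinearMap.mul_def, InnerProductSpace.comp_rankOne,
    InnerProductSpace.rankOne_comp, hadj, hinvol]

lemma isKreinSkewAdjoint_of_inner_eq_neg {J T : H →L[ℝ] H} (hJ : IsFundamentalSymmetry J)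
    (hT : ∀ x y, inner ℝ (T x) (J y) = -inner ℝ x (J (T y))) : IsKreinSkewAdjoint J T := by
  have hstar : star T * J = -(J * T) := by
    ext1 y
    refine ext_inner_left ℝ fun x ↦ ?_
    simp [ContinuousLinearMap.star_eq_adjoint, ContinuousLinearMap.adjoint_inner_right, hT]
  calc T * J + J * star T = T * J + J * (star T * J) * J := by
        rw [mul_assoc, mul_assoc, hJ.mul_self, mul_one]
    _ = T * J - (J * J) * T * J := by rw [hstar]; noncomm_ring
    _ = 0 := by rw [hJ.mul_self, one_mul, sub_self]

theorem stmt9_general {J : H →L[ℝ] H} (hJ : IsFundamentalSymmetry J) {b : ℝ} {v w : H}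
    (hv : inner ℝ v (J v) = 0) (hw : inner ℝ w (J w) = 0) (hvw : inner ℝ v (J w) ≠ 0)
    {Δ : ℝ → H →L[ℝ] H} (hΔ : ∃ D : ℝ, ∀ t ∈ Ioo 0 b, ‖Δ t‖ ≤ D)
    (hskew : ∀ t ∈ Ioo 0 b, ∀ x y, inner ℝ (Δ t x) (J y) = -inner ℝ x (J (Δ t y)))
    {G : ℝ → ℝ → H →L[ℝ] H}
    (hG : ∀ p ∈ Ioo 0 b, ∀ t ∈ Ioo 0 b,
      HasDerivAt (G p) (G p t * ((-t⁻¹) • kreinWedge J w v + Δ t)) t)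
    (hGp : ∀ p ∈ Ioo 0 b, G p p = 1) :
    ∃ C : ℝ, 0 < C ∧ ∀ p ∈ Ioo 0 b, ∀ t ∈ Ioc 0 p,
      (t / p) ^ |inner ℝ v (J w)| * ‖G p t‖ ≤ C ∧
      (t / p) ^ |inner ℝ v (J w)| * ‖Ring.inverse (G p t)‖ ≤ C := by
  obtain ⟨D, hD⟩ := hΔ
  have hwv : inner ℝ w (J v) = inner ℝ v (J w) := by
    rw [real_inner_comm]
    exact hJ.isSelfAdjoint.isSymmetric v w
  obtain ⟨P, hP, hAP⟩ := exists_eigenprojections_kreinWedge hv hw rfl hwv hvw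
  set ζ := inner ℝ v (J w)
  set κ := ∑ i, ‖P i‖
  have hgrowth : ∀ x : ℝ, 1 ≤ x →
      ‖NormedSpace.exp (Real.log x • kreinWedge J w v)‖ ≤ κ * x ^ |ζ| := fun x hx ↦
    norm_exp_log_smul_le_of_eigenprojections hP hAP
      (by simp [Fin.forall_fin_succ, le_abs_self, neg_le_abs]) hx
  refine ⟨κ * ‖(1 : H →L[ℝ] H)‖ * Real.exp (κ * D * b) + 1, by positivity, fun p hp t ht ↦ ?_⟩
  have hsub : Icc t p ⊆ Ioo 0 b := Icc_subset_Ioo ht.1 hp.2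
  have htb : t ∈ Ioo 0 b := hsub (left_mem_Icc.2 ht.2)
  have hskew' : ∀ s ∈ Ioo 0 b, IsKreinSkewAdjoint J ((-s⁻¹) • kreinWedge J w v + Δ s) := fun s hs ↦
    ((isKreinSkewAdjoint_kreinWedge hJ w v).smul _).add
      (isKreinSkewAdjoint_of_inner_eq_neg hJ (hskew s hs))
  have hbound : (t / p) ^ |ζ| * ‖G p t‖ ≤ κ * ‖(1 : H →L[ℝ] H)‖ * Real.exp (κ * D * b) + 1 := by
    have hD0 : 0 ≤ D := (norm_nonneg _).trans (hD t htb)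
    have hpt := rpow_mul_norm_le_mul_exp hgrowth ht.1 ht.2 (fun s hs ↦ hD s (hsub hs))
      fun s hs ↦ hG p hp s (hsub hs)
    rw [hGp p hp] at hpt
    refine hpt.trans (le_add_of_le_of_nonneg ?_ zero_le_one)
    gcongr
    linarith [ht.1, hp.2]
  refine ⟨hbound, ?_⟩
  rwa [norm_ringInverse_eq_of_hasDerivAt hJ isOpen_Ioo isPreconnected_Ioo hskew' (hG p hp) hp
    (hGp p hp) htb]

end KreinSpace

section Minkowski

/-- The reflection in the last coordinate, so that `mink x y = ⟪x, J y⟫`. -/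
def minkowskiSymmetry (n : ℕ) : E n →L[ℝ] E n :=
  Matrix.toEuclideanCLM (𝕜 := ℝ) (Matrix.diagonal fun i ↦ if i = Fin.last (n + 1) then -1 else 1)

lemma isFundamentalSymmetry_minkowskiSymmetry (n : ℕ) :
    IsFundamentalSymmetry (minkowskiSymmetry n) where
  isSelfAdjoint := by
    rw [IsSelfAdjoint, minkowskiSymmetry, ← map_star, Matrix.star_eq_conjTranspose,
      Matrix.diagonal_conjTranspose, star_trivial]
  mul_self := by
    have hsq : (fun i : Fin (n + 2) ↦ (if i = Fin.last (n + 1) then (-1 : ℝ) else 1) *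
        if i = Fin.last (n + 1) then -1 else 1) = fun _ ↦ 1 := by
      ext i
      split_ifs <;> simp
    rw [minkowskiSymmetry, ← map_mul, Matrix.diagonal_mul_diagonal, hsq, Matrix.diagonal_one,
      map_one]

lemma mink_eq_inner (x y : E n) : mink x y = inner ℝ x (minkowskiSymmetry n y) := by
  rw [mink, PiLp.inner_apply]
  refine Finset.sum_congr rfl fun i _ ↦ ?_
  have hcoord : minkowskiSymmetry n y i = (if i = Fin.last (n + 1) then -1 else 1) * y i := by
    simp [minkowskiSymmetry, Matrix.mulVec_diagonal]
  rw [hcoord, RCLike.inner_apply, conj_trivial]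
  ring

lemma wedge_eq_kreinWedge (v w : E n) : wedge v w = kreinWedge (minkowskiSymmetry n) v w := by
  ext1 x
  change mink v x • w - mink w x • v = _
  rw [mink_comm v, mink_comm w, mink_eq_inner, mink_eq_inner, real_inner_comm,
    real_inner_comm _ x]
  rfl

end Minkowski

/-- Lemma 3.5: uniform bound for primitives of Minkowski pole forms. -/
theorem stmt9 {n : ℕ} (b : ℝ) (hb : 0 < b)
    (vp vm : E n) (hvp : mink vp vp = 0) (hvm : mink vm vm = 0)
    (hζ : 0 < mink vp vm)
    (Δ : ℝ → E n →L[ℝ] E n)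
    (hΔc : ContinuousOn Δ (Set.Ioo 0 b))
    (hΔb : ∃ D : ℝ, ∀ t ∈ Set.Ioo (0:ℝ) b, ‖Δ t‖ ≤ D)
    (hΔskew : ∀ t ∈ Set.Ioo (0:ℝ) b, ∀ x y : E n, mink (Δ t x) y = - mink x (Δ t y))
    (G : ℝ → ℝ → E n →L[ℝ] E n)
    (hG : ∀ p ∈ Set.Ioo (0:ℝ) b, ∀ t ∈ Set.Ioo (0:ℝ) b,
      HasDerivAt (G p) (G p t * ((-t⁻¹) • wedge vm vp + Δ t)) t)
    (hGp : ∀ p ∈ Set.Ioo (0:ℝ) b, G p p = 1) :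
    ∃ C : ℝ, 0 < C ∧ ∃ b' ∈ Set.Ioc (0:ℝ) b, ∀ p ∈ Set.Ioo (0:ℝ) b', ∀ t ∈ Set.Ioc (0:ℝ) p,
      (t / p) ^ (mink vp vm) * ‖G p t‖ ≤ C ∧
      (t / p) ^ (mink vp vm) * ‖Ring.inverse (G p t)‖ ≤ C := by
  simp only [mink_eq_inner, wedge_eq_kreinWedge] at *
  obtain ⟨C, hC, hbound⟩ := stmt9_general (isFundamentalSymmetry_minkowskiSymmetry n) hvp hvm hζ.ne'
    hΔb hΔskew hG hGp
  exact ⟨C, hC, b, ⟨hb, le_rfl⟩, by simpa only [abs_of_pos hζ] using hbound⟩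
end
end
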